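/- Let N ≥ 2 be an integer, 0 < R₁ < R₂, and let Q : [R₁,R₂] → ℝ be continuous satisfying (q1) and (q2). Let g satisfy (g1), be continuously differentiable on a right neighborhood of s = 0 with g'(0) = 0, and satisfy lim_{s→+∞} g(s)/s = +∞. Then there exists a C² function w : [R₁,R₂] → ℝ with w(r) > 0 for all r ∈ [R₁,R₂], w''(r) + ((N−1)/r) w'(r) + Q(r) g(w(r)) = 0 for all r ∈ [R₁,R₂], and w'(R₁) = w'(R₂) = 0; that is, the Neumann problem −Δu = Q(‖x‖) g(u) on the annulus {x ∈ ℝᴺ : R₁ < ‖x‖ < R₂} has at least one positive radially symmetric solution u(x) = w(‖x‖). -/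

import Mathlib

open MeasureTheory Set Filter

/-- The Neumann problem for the radial equation
`w'' + ((N−1)/r) w' + Q(r) g(w) = 0` on `[R₁,R₂]` has a positive `C²` solution,
i.e. the Neumann problem `−Δu = Q(‖x‖) g(u)` on the annulus has a positive
radially symmetric solution `u(x) = w(‖x‖)`. -/
def RadialNeumannPosSol (N : ℕ) (R₁ R₂ : ℝ) (Q g : ℝ → ℝ) : Prop :=
  ∃ w w' w'' : ℝ → ℝ,
    (∀ r ∈ Icc R₁ R₂, HasDerivWithinAt w (w' r) (Icc R₁ R₂) r) ∧
    (∀ r ∈ Icc R₁ R₂, HasDerivWithinAt w' (w'' r) (Icc R₁ R₂) r) ∧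
    ContinuousOn w'' (Icc R₁ R₂) ∧
    (∀ r ∈ Icc R₁ R₂, 0 < w r) ∧
    (∀ r ∈ Icc R₁ R₂, w'' r + (((N : ℝ) - 1) / r) * w' r + Q r * g (w r) = 0) ∧
    w' R₁ = 0 ∧ w' R₂ = 0

/-- Condition (q1): there are `m ≥ 1` pairwise disjoint closed intervals in
`[R₁,R₂]` on which `Q ≥ 0` with `max Q > 0`, while `Q ≤ 0` outside them. -/
def CondQ1 (R₁ R₂ : ℝ) (Q : ℝ → ℝ) : Prop :=
  ∃ (m : ℕ) (σ τ : Fin m → ℝ), 0 < m ∧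
    (∀ i, R₁ ≤ σ i ∧ σ i ≤ τ i ∧ τ i ≤ R₂) ∧
    (Pairwise fun i j => Disjoint (Icc (σ i) (τ i)) (Icc (σ j) (τ j))) ∧
    (∀ i, ∀ r ∈ Icc (σ i) (τ i), 0 ≤ Q r) ∧
    (∀ i, ∃ r ∈ Icc (σ i) (τ i), 0 < Q r) ∧
    (∀ r ∈ Icc R₁ R₂ \ ⋃ i, Icc (σ i) (τ i), Q r ≤ 0)

/-- Condition (g1): `g : [0,∞) → [0,∞)` is continuous, `g 0 = 0`, `g > 0` on `(0,∞)`. -/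
def CondG1 (g : ℝ → ℝ) : Prop :=
  ContinuousOn g (Ici (0:ℝ)) ∧ (∀ s : ℝ, 0 ≤ s → 0 ≤ g s) ∧ g 0 = 0 ∧
    ∀ s : ℝ, 0 < s → 0 < g s

/-- `g` is regularly oscillating at zero. -/
def RegOscAtZero (g : ℝ → ℝ) : Prop :=
  ∀ ε : ℝ, 0 < ε → ∃ δ > (0:ℝ), ∃ η > (0:ℝ), ∀ s ω : ℝ,
    0 < s → s < δ → |ω - 1| < η → |g (ω * s) / g s - 1| < ε

/-- `liminf_{s → +∞} g(s)/s`, computed in `EReal`. -/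
noncomputable def GrowthLiminf (g : ℝ → ℝ) : EReal :=
  liminf (fun s : ℝ => ((g s / s : ℝ) : EReal)) atTop

/-- `limsup_{s → +∞} g(s)/s`, computed in `EReal`. -/
noncomputable def GrowthLimsup (g : ℝ → ℝ) : EReal :=
  limsup (fun s : ℝ => ((g s / s : ℝ) : EReal)) atTop

/-!
Written as a system for `w` and the flux `y = r ^ (N - 1) * w'`, the problem is to find a zero of
the final flux `F(d, ν) = y(R₂)` of the trajectory with `w(R₁) = d`, `y(R₁) = 0`, at `ν = 0`; the
parameter `ν ≥ 0` adds `ν` times the positive part of `Q` to the equation. Take `g` Lipschitz first.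
A small `δ > 0` has `F(δ, 0) > 0`: the trajectory stays close to `δ`, where `g` is nearly constant,
and `Q` has negative mean. Superlinear growth of `g` on the intervals where `Q` is positive bounds
all Neumann solutions uniformly in `ν`, so `F(d, ν) ≠ 0` for large `d`, while integrating the
equation shows that there are none for a large `ν₀`. Since `F(-1, ν₀) < 0`, continuity along the
path `(-1, ν₀) → (d, ν₀) → (d, 0)` gives `F(d, 0) < 0`, and `F(·, 0)` vanishes between `δ` and `d`.

A general `g` is the limit of its Lipschitz minorants. The bounds pass to the limit, and the limit
is positive because a solution touching zero would vanish identically, `g` being Lipschitz near `0`.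
-/

open scoped NNReal Topology

/-! ### Global flows of Lipschitz fields -/

section Flow

variable {E : Type*} [NormedAddCommGroup E] [NormedSpace ℝ E] {V : ℝ → E → E} {K : ℝ≥0} {a b : ℝ}

/-- The curve `s ↦ exp (l s) • u s`, extended past the endpoints of `[a, b]` by freezing `u`. In
terms of `u`, the supremum norm becomes Bielecki's weighted norm of the curve. -/
noncomputable def weightedCurve (hab : a ≤ b) (l : ℝ) (u : C(Icc a b, E)) (s : ℝ) : E :=
  Real.exp (l * s) • u (projIcc a b hab s)

/-- The Picard iterate of a weighted curve. -/
noncomputable def picardCurve (V : ℝ → E → E) (hab : a ≤ b) (l : ℝ) (x₀ : E) (u : C(Icc a b, E))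
    (t : ℝ) : E :=
  x₀ + ∫ s in a..t, V s (weightedCurve hab l u s)

theorem continuous_weightedCurve (hab : a ≤ b) (l : ℝ) (u : C(Icc a b, E)) :
    Continuous (weightedCurve hab l u) := by
  have : Continuous fun s => u (projIcc a b hab s) := u.continuous.comp continuous_projIcc
  unfold weightedCurve
  fun_prop

theorem norm_weightedCurve_sub_le (hab : a ≤ b) (l : ℝ) (u v : C(Icc a b, E)) (s : ℝ) :
    ‖weightedCurve hab l u s - weightedCurve hab l v s‖ ≤ Real.exp (l * s) * dist u v := by
  rw [weightedCurve, weightedCurve, ← smul_sub, norm_smul, Real.norm_eq_abs, Real.abs_exp,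
    ← dist_eq_norm]
  gcongr
  exact ContinuousMap.dist_apply_le_dist _

variable [CompleteSpace E]

theorem hasDerivAt_picardCurve (hV : Continuous ↿V) (hab : a ≤ b) (l : ℝ) (x₀ : E)
    (u : C(Icc a b, E)) (t : ℝ) :
    HasDerivAt (picardCurve V hab l x₀ u) (V t (weightedCurve hab l u t)) t := by
  have hc : Continuous fun s => V s (weightedCurve hab l u s) :=
    hV.comp (continuous_id.prodMk (continuous_weightedCurve hab l u))
  exact (hc.integral_hasStrictDerivAt a t).hasDerivAt.const_add x₀

theorem norm_picardCurve_sub_le (hV : Continuous ↿V) (hK : ∀ t, LipschitzWith K (V t)) (hab : a ≤ b)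
    {l : ℝ} (hl : 0 < l) (x₀ : E) (u v : C(Icc a b, E)) {t : ℝ} (ht : t ∈ Icc a b) :
    ‖picardCurve V hab l x₀ u t - picardCurve V hab l x₀ v t‖ ≤
      K / l * dist u v * Real.exp (l * t) := by
  have hd (s : ℝ) := (hasDerivAt_picardCurve hV hab l x₀ u s).sub
    (hasDerivAt_picardCurve hV hab l x₀ v s)
  refine image_norm_le_of_norm_deriv_right_le_deriv_boundary
    (f := fun s => picardCurve V hab l x₀ u s - picardCurve V hab l x₀ v s)
    (fun s _ => (hd s).continuousAt.continuousWithinAt) (fun s _ => (hd s).hasDerivWithinAt) ?_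
    (fun s => (((hasDerivAt_id s).const_mul l).exp.const_mul (K / l * dist u v)))
    (fun s _ => ?_) ht
  · simp only [picardCurve, intervalIntegral.integral_same, sub_self, norm_zero]
    positivity
  · calc ‖V s (weightedCurve hab l u s) - V s (weightedCurve hab l v s)‖
        ≤ K * ‖weightedCurve hab l u s - weightedCurve hab l v s‖ := (hK s).norm_sub_le _ _
      _ ≤ K * (Real.exp (l * s) * dist u v) := by
        gcongr
        exact norm_weightedCurve_sub_le hab l u v s
      _ = K / l * dist u v * (Real.exp (l * s) * (l * 1)) := by field_simp

/-- The Picard operator on weighted curves, a contraction for large `l`. -/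
noncomputable def picardMap (hV : Continuous ↿V) (hab : a ≤ b) (l : ℝ) (x₀ : E)
    (u : C(Icc a b, E)) : C(Icc a b, E) where
  toFun t := Real.exp (-(l * t)) • picardCurve V hab l x₀ u t
  continuous_toFun := by
    have hc : Continuous (picardCurve V hab l x₀ u) :=
      continuous_iff_continuousAt.2 fun t => (hasDerivAt_picardCurve hV hab l x₀ u t).continuousAt
    fun_prop

theorem contractingWith_picardMap (hV : Continuous ↿V) (hK : ∀ t, LipschitzWith K (V t))
    (hab : a ≤ b) (x₀ : E) :
    ContractingWith (K / (K + 1)) (picardMap hV hab (K + 1) x₀) := by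
  refine ⟨(div_lt_one (by positivity)).2 (lt_add_one K), LipschitzWith.of_dist_le_mul fun u v => ?_⟩
  rw [ContinuousMap.dist_le (by positivity)]
  intro t
  have hl : (0 : ℝ) < K + 1 := by positivity
  have hexp : Real.exp (-((K + 1) * t)) * Real.exp ((K + 1) * t) = 1 := by
    rw [← Real.exp_add, neg_add_cancel, Real.exp_zero]
  calc dist (picardMap hV hab (K + 1) x₀ u t) (picardMap hV hab (K + 1) x₀ v t)
      = Real.exp (-((K + 1) * t)) *
          ‖picardCurve V hab (K + 1) x₀ u t - picardCurve V hab (K + 1) x₀ v t‖ := by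
        rw [dist_eq_norm, picardMap, picardMap, ContinuousMap.coe_mk, ContinuousMap.coe_mk,
          ← smul_sub, norm_smul, Real.norm_eq_abs, Real.abs_exp]
    _ ≤ Real.exp (-((K + 1) * t)) * (K / (K + 1) * dist u v * Real.exp ((K + 1) * t)) := by
        gcongr
        exact norm_picardCurve_sub_le hV hK hab hl x₀ u v t.2
    _ = K / (K + 1) * dist u v := by linear_combination (K / (K + 1) * dist u v) * hexp
    _ = ↑(K / (K + 1)) * dist u v := by push_cast; rfl

theorem exists_forall_mem_Icc_hasDerivAt (hV : Continuous ↿V) (hK : ∀ t, LipschitzWith K (V t))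
    (hab : a ≤ b) (x₀ : E) :
    ∃ X : ℝ → E, X a = x₀ ∧ ∀ t ∈ Icc a b, HasDerivAt X (V t (X t)) t := by
  obtain ⟨u, hu⟩ : ∃ u, picardMap hV hab (K + 1) x₀ u = u :=
    ⟨_, (contractingWith_picardMap hV hK hab x₀).fixedPoint_isFixedPt⟩
  refine ⟨picardCurve V hab (K + 1) x₀ u, by simp [picardCurve], fun t ht => ?_⟩
  have hfix : weightedCurve hab (K + 1) u t = picardCurve V hab (K + 1) x₀ u t := by
    rw [weightedCurve, projIcc_of_mem hab ht, ← congrArg (· ⟨t, ht⟩) hu, picardMap,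
      ContinuousMap.coe_mk, smul_smul, ← Real.exp_add, add_neg_cancel, Real.exp_zero, one_smul]
  exact hfix ▸ hasDerivAt_picardCurve hV hab (K + 1) x₀ u t

theorem exists_continuous_flow (hV : Continuous ↿V) (hK : ∀ t, LipschitzWith K (V t))
    (hab : a ≤ b) :
    ∃ Φ : E → ℝ → E, (∀ x, Φ x a = x) ∧
      (∀ x, ∀ t ∈ Icc a b, HasDerivAt (Φ x) (V t (Φ x t)) t) ∧ Continuous fun x => Φ x b := by
  choose Φ hΦa hΦ using exists_forall_mem_Icc_hasDerivAt hV hK hab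
  refine ⟨Φ, hΦa, hΦ, ?_⟩
  have hcont (x : E) : ContinuousOn (Φ x) (Icc a b) := fun t ht =>
    (hΦ x t ht).continuousAt.continuousWithinAt
  have hder (x : E) : ∀ t ∈ Ico a b, HasDerivWithinAt (Φ x) (V t (Φ x t)) (Ici t) t :=
    fun t ht => (hΦ x t (Ico_subset_Icc_self ht)).hasDerivWithinAt
  refine (LipschitzWith.of_dist_le_mul (K := (Real.exp (K * (b - a))).toNNReal)
    fun x z => ?_).continuous
  rw [Real.coe_toNNReal _ (Real.exp_pos _).le, mul_comm]
  exact dist_le_of_trajectories_ODE hK (hcont x) (hder x) (hcont z) (hder z)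
    (by rw [hΦa, hΦa]) b (right_mem_Icc.2 hab)

end Flow

/-! ### Limits of trajectories -/

section Compactness

theorem exists_subseq_tendsto_of_lipschitzWith {α β : Type*} [PseudoMetricSpace α] [CompactSpace α]
    [MetricSpace β] {f : ℕ → α → β} {K : ℝ≥0} (hf : ∀ n, LipschitzWith K (f n)) {s : Set β}
    (hs : IsCompact s) (hfs : ∀ n x, f n x ∈ s) :
    ∃ φ : ℕ → ℕ, StrictMono φ ∧ ∃ u : C(α, β),
      ∀ x, Tendsto (fun n => f (φ n) x) atTop (𝓝 (u x)) := by
  let F (n : ℕ) : BoundedContinuousFunction α β := .mkOfCompact ⟨f n, (hf n).continuous⟩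
  have hlip (G : range F) : LipschitzWith K (G : BoundedContinuousFunction α β) := by
    obtain ⟨_, n, rfl⟩ := G
    exact hf n
  have hcomp : IsCompact (closure (range F)) := by
    refine BoundedContinuousFunction.arzela_ascoli s hs _ ?_
      (LipschitzWith.uniformEquicontinuous _ K hlip).equicontinuous
    rintro _ x ⟨n, rfl⟩
    exact hfs n x
  obtain ⟨u, -, φ, hφ, hu⟩ := hcomp.tendsto_subseq
    fun n => subset_closure (mem_range_self (f := F) n)
  exact ⟨φ, hφ, u, fun x => ((continuous_eval_const x).tendsto u).comp hu⟩

variable {E : Type*} [NormedAddCommGroup E] [NormedSpace ℝ E] {a b : ℝ} {V : ℕ → ℝ → E → E}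
  {W : ℝ → E → E} {X : ℕ → ℝ → E} {C : ℝ≥0}

theorem eq_add_integral_of_tendsto_of_hasDerivAt [CompleteSpace E] (hab : a ≤ b)
    (hV : ∀ n, Continuous ↿(V n))
    (hVW : ∀ t ∈ Icc a b, ∀ x, Tendsto (fun q : ℕ × E => V q.1 t q.2) (atTop ×ˢ 𝓝 x) (𝓝 (W t x)))
    (hX : ∀ n, ∀ t ∈ Icc a b, HasDerivAt (X n) (V n t (X n t)) t)
    (hC : ∀ n, ∀ t ∈ Icc a b, ‖V n t (X n t)‖ ≤ C) {u : ℝ → E}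
    (hu : ∀ t ∈ Icc a b, Tendsto (fun n => X n t) atTop (𝓝 (u t))) {t : ℝ} (ht : t ∈ Icc a b) :
    u t = u a + ∫ s in a..t, W s (u s) := by
  have hsub : uIcc a t ⊆ Icc a b := by
    rw [uIcc_of_le ht.1]
    exact Icc_subset_Icc_right ht.2
  have hcont (n : ℕ) : ContinuousOn (fun s => V n s (X n s)) (uIcc a t) :=
    (hV n).comp_continuousOn (continuousOn_id.prodMk fun s hs =>
      (hX n s (hsub hs)).continuousAt.continuousWithinAt)
  have hftc (n : ℕ) : ∫ s in a..t, V n s (X n s) = X n t - X n a :=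
    intervalIntegral.integral_eq_sub_of_hasDerivAt (fun s hs => hX n s (hsub hs))
      (hcont n).intervalIntegrable
  have hlim : Tendsto (fun n => ∫ s in a..t, V n s (X n s)) atTop (𝓝 (∫ s in a..t, W s (u s))) := by
    refine intervalIntegral.tendsto_integral_filter_of_dominated_convergence (fun _ => C) ?_ ?_
      intervalIntegrable_const ?_
    · exact .of_forall fun n =>
        ((hcont n).mono uIoc_subset_uIcc).aestronglyMeasurable measurableSet_uIoc
    · exact .of_forall fun n => ae_of_all _ fun s hs => hC n s (hsub (uIoc_subset_uIcc hs))
    · refine ae_of_all _ fun s hs => ?_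
      have hs' := hsub (uIoc_subset_uIcc hs)
      exact (hVW s hs' (u s)).comp (tendsto_id.prodMk (hu s hs'))
  simp_rw [hftc] at hlim
  rw [← tendsto_nhds_unique ((hu t ht).sub (hu a (left_mem_Icc.2 hab))) hlim, add_sub_cancel]

theorem exists_subseq_tendsto_hasDerivAt [CompleteSpace E] (hab : a ≤ b)
    (hV : ∀ n, Continuous ↿(V n)) (hW : Continuous ↿W)
    (hVW : ∀ t ∈ Icc a b, ∀ x, Tendsto (fun q : ℕ × E => V q.1 t q.2) (atTop ×ˢ 𝓝 x) (𝓝 (W t x)))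
    (hX : ∀ n, ∀ t ∈ Icc a b, HasDerivAt (X n) (V n t (X n t)) t)
    (hC : ∀ n, ∀ t ∈ Icc a b, ‖V n t (X n t)‖ ≤ C) {s : Set E} (hs : IsCompact s)
    (hXs : ∀ n, ∀ t ∈ Icc a b, X n t ∈ s) :
    ∃ (φ : ℕ → ℕ) (Y : ℝ → E), StrictMono φ ∧ (∀ t ∈ Icc a b, HasDerivAt Y (W t (Y t)) t) ∧
      ∀ t ∈ Icc a b, Tendsto (fun n => X (φ n) t) atTop (𝓝 (Y t)) := by
  have hlip (n : ℕ) : LipschitzWith C fun t : Icc a b => X n t :=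
    lipschitzOnWith_iff_restrict.1 <| (convex_Icc a b).lipschitzOnWith_of_nnnorm_hasDerivWithin_le
      (fun t ht => (hX n t ht).hasDerivWithinAt) (hC n)
  obtain ⟨φ, hφ, u, hu⟩ := exists_subseq_tendsto_of_lipschitzWith hlip hs fun n t => hXs n t t.2
  set v : ℝ → E := IccExtend hab u with hv
  have hvu (t) (ht : t ∈ Icc a b) : Tendsto (fun n => X (φ n) t) atTop (𝓝 (v t)) := by
    rw [hv, IccExtend_of_mem hab _ ht]
    exact hu ⟨t, ht⟩
  have hVφ (t) (ht : t ∈ Icc a b) (x : E) :=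
    (hVW t ht x).comp (hφ.tendsto_atTop.prodMap tendsto_id)
  have hint (t) (ht : t ∈ Icc a b) : v a + ∫ s in a..t, W s (v s) = v t :=
    (eq_add_integral_of_tendsto_of_hasDerivAt hab (fun n => hV (φ n)) hVφ (fun n => hX (φ n))
      (fun n => hC (φ n)) hvu ht).symm
  have hcont : Continuous fun s => W s (v s) :=
    hW.comp (continuous_id.prodMk u.continuous.Icc_extend')
  refine ⟨φ, fun t => v a + ∫ s in a..t, W s (v s), hφ, fun t ht => ?_, fun t ht => ?_⟩ <;>
    simp only [hint t ht]
  · exact (hcont.integral_hasStrictDerivAt a t).hasDerivAt.const_add (v a)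
  · exact hvu t ht

end Compactness

/-! ### Lipschitz regularization -/

section LipEnvelope

variable {α : Type*} [PseudoMetricSpace α] {f : α → ℝ} {K : ℝ≥0} {x : α}

/-- The largest `K`-Lipschitz minorant of `f` (for `f` bounded below; otherwise the infimum is
the junk value `0`). -/
noncomputable def lipEnvelope (f : α → ℝ) (K : ℝ≥0) (x : α) : ℝ :=
  ⨅ t, f t + K * dist x t

theorem lipEnvelope_le_add (hf : ∀ t, 0 ≤ f t) (x t : α) :
    lipEnvelope f K x ≤ f t + K * dist x t := by
  refine ciInf_le ⟨0, ?_⟩ t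
  rintro _ ⟨s, rfl⟩
  have := hf s
  positivity

theorem lipEnvelope_le (hf : ∀ t, 0 ≤ f t) (x : α) : lipEnvelope f K x ≤ f x := by
  simpa using lipEnvelope_le_add (K := K) hf x x

theorem le_lipEnvelope {c : ℝ} (h : ∀ t, c ≤ f t + K * dist x t) : c ≤ lipEnvelope f K x :=
  haveI : Nonempty α := ⟨x⟩
  le_ciInf h

theorem lipEnvelope_nonneg (hf : ∀ t, 0 ≤ f t) (x : α) : 0 ≤ lipEnvelope f K x :=
  le_lipEnvelope fun t => by
    have := hf t
    positivity

theorem lipschitzWith_lipEnvelope (hf : ∀ t, 0 ≤ f t) (K : ℝ≥0) :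
    LipschitzWith K (lipEnvelope f K) := by
  refine LipschitzWith.of_le_add_mul K fun x y => ?_
  suffices lipEnvelope f K x - K * dist x y ≤ lipEnvelope f K y by linarith
  refine le_lipEnvelope fun t => ?_
  calc lipEnvelope f K x - K * dist x y ≤ f t + K * dist x t - K * dist x y := by
        gcongr
        exact lipEnvelope_le_add hf x t
    _ ≤ f t + K * (dist x y + dist y t) - K * dist x y := by
        gcongr
        exact dist_triangle x y t
    _ = f t + K * dist y t := by ring

theorem tendsto_lipEnvelope {ι : Type*} {l : Filter ι} {k : ι → ℝ≥0} (hf : ∀ t, 0 ≤ f t)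
    (hx : ContinuousAt f x) (hk : Tendsto k l atTop) :
    Tendsto (fun q : ι × α => lipEnvelope f (k q.1) q.2) (l ×ˢ 𝓝 x) (𝓝 (f x)) := by
  refine tendsto_order.2 ⟨fun c hc => ?_, fun c hc => ?_⟩
  · obtain ⟨c', hcc', hc'⟩ := exists_between hc
    obtain ⟨d, hd, hball⟩ := Metric.eventually_nhds_iff.1 (hx.eventually_const_lt hc')
    have hk' : ∀ᶠ i in l, c' ≤ k i * (d / 2) :=
      ((NNReal.tendsto_coe_atTop.2 hk).atTop_mul_const (half_pos hd)).eventually_ge_atTop c'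
    have hball' : ∀ᶠ z in 𝓝 x, dist z x < d / 2 := Metric.ball_mem_nhds x (half_pos hd)
    filter_upwards [hk'.prod_mk hball'] with ⟨i, z⟩ ⟨hi, hz⟩
    refine hcc'.trans_le (le_lipEnvelope fun t => ?_)
    rcases lt_or_ge (dist z t) (d / 2) with ht | ht
    · have htx : dist t x < d := (dist_triangle_left t x z).trans_lt (by linarith)
      have := hball htx
      have : 0 ≤ k i * dist z t := by positivity
      linarith
    · have := hf t
      have : k i * (d / 2) ≤ k i * dist z t := by gcongr
      linarith
  · filter_upwards [tendsto_snd.eventually (hx.eventually_lt_const hc)] with q hq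
    exact (lipEnvelope_le hf q.2).trans_lt hq

end LipEnvelope

/-! ### The radial equation in flux form -/

/-- Bounds on the weight `p` and the coefficient `Q` of the radial equation
`(p w')' + p Q g(w) = 0`. For the Laplacian in dimension `N`, `p r = r ^ (N - 1)`; both functions
are extended continuously beyond `[R₁, R₂]`, so the bounds are global. -/
structure CoeffBounds (p Q : ℝ → ℝ) (p₀ p₁ q : ℝ) : Prop where
  continuous_weight : Continuous p
  continuous_coeff : Continuous Q
  p₀_pos : 0 < p₀
  le_weight : ∀ r, p₀ ≤ p r
  weight_le : ∀ r, p r ≤ p₁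
  abs_coeff_le : ∀ r, |Q r| ≤ q

/-- The pair `(w, y)` solves the equation `(p w')' + p f(r, w) = 0` on `[a, b]`, written as a
first-order system for `w` and the flux `y = p w'`. -/
structure IsRadialSol (a b : ℝ) (p : ℝ → ℝ) (f : ℝ → ℝ → ℝ) (w y : ℝ → ℝ) : Prop where
  hasDerivAt : ∀ r ∈ Icc a b, HasDerivAt w (y r / p r) r
  hasDerivAt_flux : ∀ r ∈ Icc a b, HasDerivAt y (-(p r * f r (w r))) r

section RadialSol

variable {a b p₀ p₁ q : ℝ} {p Q w y : ℝ → ℝ} {f f' : ℝ → ℝ → ℝ}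

namespace CoeffBounds

theorem weight_pos (hc : CoeffBounds p Q p₀ p₁ q) (r : ℝ) : 0 < p r :=
  hc.p₀_pos.trans_le (hc.le_weight r)

theorem p₁_pos (hc : CoeffBounds p Q p₀ p₁ q) : 0 < p₁ :=
  (hc.weight_pos 0).trans_le (hc.weight_le 0)

theorem q_nonneg (hc : CoeffBounds p Q p₀ p₁ q) : 0 ≤ q :=
  (abs_nonneg _).trans (hc.abs_coeff_le 0)

end CoeffBounds

namespace IsRadialSol

theorem continuousOn (hs : IsRadialSol a b p f w y) : ContinuousOn w (Icc a b) :=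
  fun r hr => (hs.hasDerivAt r hr).continuousAt.continuousWithinAt

theorem continuousOn_flux (hs : IsRadialSol a b p f w y) : ContinuousOn y (Icc a b) :=
  fun r hr => (hs.hasDerivAt_flux r hr).continuousAt.continuousWithinAt

theorem mono (hs : IsRadialSol a b p f w y) {c d : ℝ} (h : Icc c d ⊆ Icc a b) :
    IsRadialSol c d p f w y :=
  ⟨fun r hr => hs.hasDerivAt r (h hr), fun r hr => hs.hasDerivAt_flux r (h hr)⟩

theorem congr (hs : IsRadialSol a b p f w y) (h : ∀ r ∈ Icc a b, f r (w r) = f' r (w r)) :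
    IsRadialSol a b p f' w y :=
  ⟨hs.hasDerivAt, fun r hr => h r hr ▸ hs.hasDerivAt_flux r hr⟩

theorem neg (hs : IsRadialSol a b p f w y) :
    IsRadialSol a b p (fun r s => -f r (-s)) (-w) (-y) where
  hasDerivAt r hr := by simpa only [Pi.neg_apply, neg_div] using (hs.hasDerivAt r hr).neg
  hasDerivAt_flux r hr := by
    simpa only [Pi.neg_apply, neg_neg, mul_neg] using (hs.hasDerivAt_flux r hr).neg

theorem reflect (hs : IsRadialSol a b p f w y) :
    IsRadialSol (-b) (-a) (fun r => p (-r)) (fun r => f (-r)) (fun r => w (-r))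
      (fun r => -y (-r)) where
  hasDerivAt r hr := by
    simpa only [Function.comp_def, mul_neg, mul_one, neg_div] using
      (hs.hasDerivAt (-r) ⟨le_neg_of_le_neg hr.2, neg_le.1 hr.1⟩).comp r (hasDerivAt_neg r)
  hasDerivAt_flux r hr := by
    simpa only [Function.comp_def, mul_neg, mul_one, neg_neg] using
      ((hs.hasDerivAt_flux (-r) ⟨le_neg_of_le_neg hr.2, neg_le.1 hr.1⟩).comp r
        (hasDerivAt_neg r)).fun_neg

theorem monotoneOn (hs : IsRadialSol a b p f w y) (hp : ∀ r, 0 < p r)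
    (hy : ∀ r ∈ Icc a b, 0 ≤ y r) : MonotoneOn w (Icc a b) :=
  monotoneOn_of_hasDerivWithinAt_nonneg (convex_Icc a b) hs.continuousOn
    (fun r hr => (hs.hasDerivAt r (interior_subset hr)).hasDerivWithinAt)
    fun r hr => div_nonneg (hy r (interior_subset hr)) (hp r).le

theorem monotoneOn_flux (hs : IsRadialSol a b p f w y) (hp : ∀ r, 0 < p r)
    (hf : ∀ r ∈ Ioo a b, f r (w r) ≤ 0) : MonotoneOn y (Icc a b) :=
  monotoneOn_of_hasDerivWithinAt_nonneg (convex_Icc a b) hs.continuousOn_flux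
    (fun r hr => (hs.hasDerivAt_flux r (interior_subset hr)).hasDerivWithinAt)
    fun r hr => neg_nonneg.2
      (mul_nonpos_of_nonneg_of_nonpos (hp r).le (hf r (by rwa [interior_Icc] at hr)))

theorem integral_eq (hs : IsRadialSol a b p f w y) (hab : a ≤ b)
    (hf : ContinuousOn (fun r => p r * f r (w r)) (Icc a b)) :
    ∫ r in a..b, p r * f r (w r) = y a - y b := by
  rw [← uIcc_of_le hab] at hf
  rw [← neg_sub (y b), ← intervalIntegral.integral_eq_sub_of_hasDerivAt
    (fun r hr => hs.hasDerivAt_flux r (uIcc_of_le hab ▸ hr)) hf.neg.intervalIntegrable,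
    intervalIntegral.integral_neg, neg_neg]

section Bounds

variable {C : ℝ} (hs : IsRadialSol a b p f w y) (hc : CoeffBounds p Q p₀ p₁ q)
  (hf : ∀ r ∈ Icc a b, |f r (w r)| ≤ C) (hya : y a = 0) {r : ℝ} (hr : r ∈ Icc a b)

include hs hc hf hya hr

theorem abs_flux_le : |y r| ≤ p₁ * C * (b - a) := by
  have ha : a ∈ Icc a b := left_mem_Icc.2 (hr.1.trans hr.2)
  have hC : 0 ≤ C := (abs_nonneg _).trans (hf a ha)
  have hp₁ := hc.p₁_pos
  have h := (convex_Icc a b).norm_image_sub_le_of_norm_hasDerivWithin_le (C := p₁ * C)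
    (fun s hs' => (hs.hasDerivAt_flux s hs').hasDerivWithinAt) (fun s hs' => ?_) ha hr
  · calc |y r| = ‖y r - y a‖ := by rw [hya, sub_zero, Real.norm_eq_abs]
      _ ≤ p₁ * C * ‖r - a‖ := h
      _ ≤ p₁ * C * (b - a) := by
        rw [Real.norm_of_nonneg (sub_nonneg.2 hr.1)]
        gcongr
        exact hr.2
  · rw [norm_neg, norm_mul, Real.norm_of_nonneg (hc.weight_pos s).le]
    exact mul_le_mul (hc.weight_le s) (hf s hs') (norm_nonneg _) hp₁.le

theorem abs_sub_le : |w r - w a| ≤ p₁ * C * (b - a) ^ 2 / p₀ := by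
  have hab : a ≤ b := hr.1.trans hr.2
  have hC : 0 ≤ C := (abs_nonneg _).trans (hf a (left_mem_Icc.2 hab))
  have hp₀ := hc.p₀_pos
  have hp₁ := hc.p₁_pos
  have := sub_nonneg.2 hab
  have h := (convex_Icc a b).norm_image_sub_le_of_norm_hasDerivWithin_le
    (C := p₁ * C * (b - a) / p₀) (fun s hs' => (hs.hasDerivAt s hs').hasDerivWithinAt)
    (fun s hs' => ?_) (left_mem_Icc.2 hab) hr
  · calc |w r - w a| ≤ p₁ * C * (b - a) / p₀ * ‖r - a‖ := h
      _ ≤ p₁ * C * (b - a) / p₀ * (b - a) := by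
        rw [Real.norm_of_nonneg (sub_nonneg.2 hr.1)]
        gcongr
        exact hr.2
      _ = p₁ * C * (b - a) ^ 2 / p₀ := by ring
  · rw [norm_div, Real.norm_of_nonneg (hc.weight_pos s).le]
    exact div_le_div₀ (by positivity) (hs.abs_flux_le hc hf hya hs') hp₀ (hc.le_weight s)

end Bounds

end IsRadialSol

end RadialSol

/-! ### Maximum principle and nonnegativity -/

namespace IsRadialSol

variable {a b : ℝ} {p w y : ℝ → ℝ} {f : ℝ → ℝ → ℝ} {J : Set ℝ} {ρ : ℝ}

theorem flux_eq_zero_of_isMaxOn (hs : IsRadialSol a b p f w y) (hp : ∀ r, 0 < p r)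
    (hρ : ρ ∈ Ioo a b) (hmax : IsMaxOn w (Icc a b) ρ) : y ρ = 0 := by
  have h := (hmax.isLocalMax (Icc_mem_nhds hρ.1 hρ.2)).hasDerivAt_eq_zero
    (hs.hasDerivAt ρ (Ioo_subset_Icc_self hρ))
  exact (div_eq_zero_iff.1 h).resolve_right (hp ρ).ne'

theorem exists_mem_le_of_flux_nonneg (hs : IsRadialSol a b p f w y) (hp : ∀ r, 0 < p r)
    (hJ : IsCompact J) (hf : ∀ r ∈ Icc a b, r ∉ J → f r (w r) ≤ 0) (hJne : (J ∩ Icc a b).Nonempty)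
    (hya : 0 ≤ y a) : ∃ j ∈ J, w a ≤ w j := by
  obtain ⟨j, ⟨hjJ, hj⟩, hleast⟩ := (hJ.inter_right isClosed_Icc).exists_isLeast hJne
  have ha : a ∈ Icc a j := left_mem_Icc.2 hj.1
  have hsj := hs.mono (Icc_subset_Icc_right hj.2)
  have hoff : ∀ r ∈ Ioo a j, f r (w r) ≤ 0 := fun r hr =>
    have hrb : r ∈ Icc a b := ⟨hr.1.le, hr.2.le.trans hj.2⟩
    hf r hrb fun hrJ => hr.2.not_ge (hleast ⟨hrJ, hrb⟩)
  have hy : ∀ r ∈ Icc a j, 0 ≤ y r := fun r hr =>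
    hya.trans (hsj.monotoneOn_flux hp hoff ha hr hr.1)
  exact ⟨j, hjJ, hsj.monotoneOn hp hy ha (right_mem_Icc.2 hj.1) hj.1⟩

theorem exists_mem_le_of_flux_nonpos (hs : IsRadialSol a b p f w y) (hp : ∀ r, 0 < p r)
    (hJ : IsCompact J) (hf : ∀ r ∈ Icc a b, r ∉ J → f r (w r) ≤ 0) (hJne : (J ∩ Icc a b).Nonempty)
    (hyb : y b ≤ 0) : ∃ j ∈ J, w b ≤ w j := by
  obtain ⟨j, hjJ, hj⟩ := hJne
  obtain ⟨i, hi, hle⟩ := hs.reflect.exists_mem_le_of_flux_nonneg (J := -J) (fun r => hp (-r)) hJ.neg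
    (fun r hr hrJ => hf (-r) ⟨le_neg_of_le_neg hr.2, neg_le.1 hr.1⟩ hrJ)
    ⟨-j, by rwa [Set.neg_mem_neg], neg_le_neg hj.2, neg_le_neg hj.1⟩
    (by simpa only [neg_neg, neg_nonneg] using hyb)
  exact ⟨-i, hi, by simpa only [neg_neg] using hle⟩

theorem exists_mem_isMaxOn (hs : IsRadialSol a b p f w y) (hp : ∀ r, 0 < p r)
    (hJ : IsCompact J) (hJab : J ⊆ Icc a b) (hJne : J.Nonempty)
    (hf : ∀ r ∈ Icc a b, r ∉ J → f r (w r) ≤ 0) (hya : 0 ≤ y a) (hyb : y b ≤ 0) :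
    ∃ j ∈ J, IsMaxOn w (Icc a b) j := by
  obtain ⟨i, hi⟩ := hJne
  obtain ⟨ρ, hρ, hmax⟩ := isCompact_Icc.exists_isMaxOn ⟨i, hJab hi⟩ hs.continuousOn
  suffices ∃ j ∈ J, w ρ ≤ w j from
    this.imp fun j hj => ⟨hj.1, fun r hr => (hmax hr).trans hj.2⟩
  rcases lt_trichotomy i ρ with hlt | rfl | hlt
  · have hsub : Icc a ρ ⊆ Icc a b := Icc_subset_Icc_right hρ.2
    refine (hs.mono hsub).exists_mem_le_of_flux_nonpos hp hJ (fun r hr => hf r (hsub hr))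
      ⟨i, hi, (hJab hi).1, hlt.le⟩ ?_
    rcases hρ.2.eq_or_lt with rfl | hρb
    · exact hyb
    · exact (hs.flux_eq_zero_of_isMaxOn hp ⟨(hJab hi).1.trans_lt hlt, hρb⟩ hmax).le
  · exact ⟨i, hi, le_rfl⟩
  · have hsub : Icc ρ b ⊆ Icc a b := Icc_subset_Icc_left hρ.1
    refine (hs.mono hsub).exists_mem_le_of_flux_nonneg hp hJ (fun r hr => hf r (hsub hr))
      ⟨i, hi, hlt.le, (hJab hi).2⟩ ?_
    rcases hρ.1.eq_or_lt with rfl | haρ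
    · exact hya
    · exact (hs.flux_eq_zero_of_isMaxOn hp ⟨haρ, hlt.trans_le (hJab hi).2⟩ hmax).ge

theorem flux_lt_of_pos (hs : IsRadialSol a b p f w y) (hp : ∀ r, 0 < p r) (hab : a < b)
    (hf : ∀ r ∈ Icc a b, 0 < f r (w r)) : y b < y a := by
  obtain ⟨r, hr, hslope⟩ := exists_hasDerivAt_eq_slope y _ hab hs.continuousOn_flux
    fun r hr => hs.hasDerivAt_flux r (Ioo_subset_Icc_self hr)
  have hneg : (y b - y a) / (b - a) < 0 :=
    hslope ▸ neg_neg_of_pos (mul_pos (hp r) (hf r (Ioo_subset_Icc_self hr)))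
  rwa [div_lt_iff₀ (sub_pos.2 hab), zero_mul, sub_neg] at hneg

theorem nonneg (hs : IsRadialSol a b p f w y) (hp : ∀ r, 0 < p r) (hab : a < b)
    (hf : ∀ r ∈ Icc a b, w r < 0 → 0 < f r (w r)) (hya : y a ≤ 0) (hyb : 0 ≤ y b) :
    ∀ r ∈ Icc a b, 0 ≤ w r := by
  have hJ : IsCompact {r ∈ Icc a b | 0 ≤ w r} := isCompact_Icc.of_isClosed_subset
    (hs.continuousOn.preimage_isClosed_of_isClosed isClosed_Icc isClosed_Ici) (sep_subset _ _)
  rcases {r ∈ Icc a b | 0 ≤ w r}.eq_empty_or_nonempty with hempty | hne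
  · have hneg : ∀ r ∈ Icc a b, w r < 0 := fun r hr => not_le.1 fun h =>
      (hempty ▸ ⟨hr, h⟩ : r ∈ (∅ : Set ℝ))
    exact absurd (hs.flux_lt_of_pos hp hab fun r hr => hf r hr (hneg r hr)) (hya.trans hyb).not_gt
  · obtain ⟨j, hj, hmax⟩ := hs.neg.exists_mem_isMaxOn hp hJ (sep_subset _ _) hne
      (fun r hr hrJ => by
        simpa using (hf r hr (not_le.1 fun h => hrJ ⟨hr, h⟩)).le)
      (neg_nonneg.2 hya) (neg_nonpos.2 hyb)
    exact fun r hr => hj.2.trans (neg_le_neg_iff.1 (hmax hr))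

end IsRadialSol

/-! ### A priori bound under superlinear growth -/

section MeanValue

variable {f f' : ℝ → ℝ} {a b C : ℝ}

theorem sub_le_mul_sub_of_hasDerivAt_le (hab : a ≤ b) (hf : ∀ x ∈ Icc a b, HasDerivAt f (f' x) x)
    (hC : ∀ x ∈ Icc a b, f' x ≤ C) : f b - f a ≤ C * (b - a) :=
  (convex_Icc a b).image_sub_le_mul_sub_of_deriv_le
    (fun x hx => (hf x hx).continuousAt.continuousWithinAt)
    (fun x hx => (hf x (interior_subset hx)).differentiableAt.differentiableWithinAt)
    (fun x hx => (hf x (interior_subset hx)).deriv.trans_le (hC x (interior_subset hx)))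
    a (left_mem_Icc.2 hab) b (right_mem_Icc.2 hab) hab

theorem mul_sub_le_sub_of_le_hasDerivAt (hab : a ≤ b) (hf : ∀ x ∈ Icc a b, HasDerivAt f (f' x) x)
    (hC : ∀ x ∈ Icc a b, C ≤ f' x) : C * (b - a) ≤ f b - f a := by
  have := sub_le_mul_sub_of_hasDerivAt_le (C := -C) hab (fun x hx => (hf x hx).fun_neg)
    fun x hx => neg_le_neg (hC x hx)
  linarith

end MeanValue

namespace IsRadialSol

variable {a b c p₀ p₁ ρ x l k s₀ : ℝ} {p w y : ℝ → ℝ} {f : ℝ → ℝ → ℝ}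

theorem antitoneOn_flux (hs : IsRadialSol a b p f w y) (hp : ∀ r, 0 < p r)
    (hf : ∀ r ∈ Icc a b, 0 ≤ f r (w r)) : AntitoneOn y (Icc a b) := by
  have := hs.neg.monotoneOn_flux hp fun r hr => by
    simpa using hf r (Ioo_subset_Icc_self hr)
  simpa using this.neg

section Concave

variable (hs : IsRadialSol a b p f w y) (hp₀ : 0 < p₀) (hlb : ∀ r, p₀ ≤ p r)
  (hf : ∀ r ∈ Icc a b, 0 ≤ f r (w r)) (hya : y a ≤ 0)

include hs hp₀ hlb hf hya

theorem flux_nonpos {r : ℝ} (hr : r ∈ Icc a b) : y r ≤ 0 :=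
  (hs.antitoneOn_flux (fun r => hp₀.trans_le (hlb r)) hf
    (left_mem_Icc.2 (hr.1.trans hr.2)) hr hr.1).trans hya

theorem antitoneOn : AntitoneOn w (Icc a b) := by
  have := hs.neg.monotoneOn (fun r => hp₀.trans_le (hlb r)) fun r hr =>
    neg_nonneg.2 (hs.flux_nonpos hp₀ hlb hf hya hr)
  simpa using this.neg

theorem neg_flux_mul_le (hub : ∀ r, p r ≤ p₁) (hwb : 0 ≤ w b) {c : ℝ} (hc : c ∈ Icc a b) :
    -y c * (b - c) ≤ p₁ * w c := by
  have hp (r : ℝ) : 0 < p r := hp₀.trans_le (hlb r)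
  have hp₁ : 0 < p₁ := (hp c).trans_le (hub c)
  have hyc := hs.flux_nonpos hp₀ hlb hf hya hc
  have hsub : Icc c b ⊆ Icc a b := Icc_subset_Icc_left hc.1
  have hdrop : w b - w c ≤ y c / p₁ * (b - c) := by
    refine sub_le_mul_sub_of_hasDerivAt_le hc.2 (fun r hr => hs.hasDerivAt r (hsub hr))
      fun r hr => ?_
    calc y r / p r ≤ y c / p r := by
          gcongr
          · exact (hp r).le
          · exact hs.antitoneOn_flux hp hf hc (hsub hr) hr.1
      _ ≤ y c / p₁ := by
          simpa only [neg_div, neg_le_neg_iff] using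
            div_le_div_of_nonneg_left (neg_nonneg.2 hyc) (hp r) (hub r)
  rw [div_mul_eq_mul_div, le_div_iff₀ hp₁] at hdrop
  nlinarith

/-- A Harnack inequality. -/
theorem le_mul_of_nonneg_right (hub : ∀ r, p r ≤ p₁) (hwb : 0 ≤ w b) {c : ℝ} (hac : a ≤ c)
    (hcb : c < b) : w a ≤ w c * (1 + p₁ * (c - a) / (p₀ * (b - c))) := by
  have hp (r : ℝ) : 0 < p r := hp₀.trans_le (hlb r)
  have hc : c ∈ Icc a b := ⟨hac, hcb.le⟩
  have hyc := hs.flux_nonpos hp₀ hlb hf hya hc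
  have hsub : Icc a c ⊆ Icc a b := Icc_subset_Icc_right hcb.le
  have hrise : y c / p₀ * (c - a) ≤ w c - w a := by
    refine mul_sub_le_sub_of_le_hasDerivAt hac (fun r hr => hs.hasDerivAt r (hsub hr))
      fun r hr => ?_
    calc y c / p₀ ≤ y c / p r := by
          simpa only [neg_div, neg_le_neg_iff] using
            div_le_div_of_nonneg_left (neg_nonneg.2 hyc) hp₀ (hlb r)
      _ ≤ y r / p r := by
          gcongr
          · exact (hp r).le
          · exact hs.antitoneOn_flux hp hf (hsub hr) hc hr.2
  have hflux : -y c ≤ p₁ * w c / (b - c) :=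
    (le_div_iff₀ (sub_pos.2 hcb)).2 (hs.neg_flux_mul_le hp₀ hlb hf hya hub hwb hc)
  calc w a ≤ w c + -y c * ((c - a) / p₀) := by linarith [div_mul_comm (y c) p₀ (c - a)]
    _ ≤ w c + p₁ * w c / (b - c) * ((c - a) / p₀) := by
        gcongr
    _ = w c * (1 + p₁ * (c - a) / (p₀ * (b - c))) := by
        field_simp [(sub_pos.2 hcb).ne']

end Concave

section Superlinear

variable (hp₀ : 0 < p₀) (hlb : ∀ r, p₀ ≤ p r) (hub : ∀ r, p r ≤ p₁) (hs₀ : 0 ≤ s₀) (hk : 0 < k)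
  (hl : 0 < l) (hkl : p₁ < p₀ * k * l ^ 2)

include hp₀ hlb hub hs₀ hk hl hkl

theorem le_of_superlinear_right (hs : IsRadialSol ρ (x + 2 * l) p f w y) (hρ : ρ ≤ x)
    (hf : ∀ r ∈ Icc ρ (x + 2 * l), 0 ≤ f r (w r)) (hyρ : y ρ ≤ 0) (hw : 0 ≤ w (x + 2 * l))
    (hsup : ∀ r ∈ Icc x (x + l), s₀ ≤ w r → k * w r ≤ f r (w r)) :
    w ρ ≤ s₀ * (1 + p₁ * (x + l - ρ) / (p₀ * l)) := by
  have hp (r : ℝ) : 0 < p r := hp₀.trans_le (hlb r)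
  have hp₁ : 0 < p₁ := (hp 0).trans_le (hub 0)
  have hβ : x + l ∈ Icc ρ (x + 2 * l) := ⟨by linarith, by linarith⟩
  have hsub : Icc x (x + l) ⊆ Icc ρ (x + 2 * l) := Icc_subset_Icc hρ hβ.2
  have hharnack := hs.le_mul_of_nonneg_right hp₀ hlb hf hyρ hub hw hβ.1 (by linarith)
  rw [show x + 2 * l - (x + l) = l by ring] at hharnack
  have hρl : 0 ≤ x + l - ρ := sub_nonneg.2 hβ.1
  suffices hwβ : w (x + l) ≤ s₀ from hharnack.trans (by gcongr)
  by_contra! hwβ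
  have hwβ0 : 0 < w (x + l) := hs₀.trans_lt hwβ
  have hydrop : y (x + l) - y x ≤ -(p₀ * (k * w (x + l))) * (x + l - x) := by
    refine sub_le_mul_sub_of_hasDerivAt_le (by linarith)
      (fun r hr => hs.hasDerivAt_flux r (hsub hr)) fun r hr => ?_
    have hwr : w (x + l) ≤ w r := hs.antitoneOn hp₀ hlb hf hyρ (hsub hr) hβ hr.2
    have hfr : k * w (x + l) ≤ f r (w r) :=
      (mul_le_mul_of_nonneg_left hwr hk.le).trans (hsup r hr (hwβ.le.trans hwr))
    exact neg_le_neg (mul_le_mul (hlb r) hfr (by positivity) (hp r).le)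
  have hyx := hs.flux_nonpos hp₀ hlb hf hyρ (hsub (left_mem_Icc.2 (by linarith)))
  have hflux := hs.neg_flux_mul_le hp₀ hlb hf hyρ hub hw hβ
  have hflux' : p₀ * (k * w (x + l)) * l * l ≤ -y (x + l) * l :=
    mul_le_mul_of_nonneg_right (by linarith) hl.le
  have : p₀ * k * l ^ 2 * w (x + l) ≤ p₁ * w (x + l) := by linarith
  exact absurd (le_of_mul_le_mul_right this hwβ0) hkl.not_ge

theorem le_of_superlinear (hs : IsRadialSol a b p f w y) (hax : a ≤ x - 2 * l)
    (hxb : x + 2 * l ≤ b) (hf : ∀ r ∈ Icc a b, 0 ≤ f r (w r)) (hw : ∀ r ∈ Icc a b, 0 ≤ w r)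
    (hsup : ∀ r ∈ Icc (x - l) (x + l), s₀ ≤ w r → k * w r ≤ f r (w r)) (hρ : ρ ∈ Icc a b)
    (hyρ : y ρ = 0) : w ρ ≤ s₀ * (1 + p₁ * (b - a) / (p₀ * l)) := by
  have hp₁ : 0 ≤ p₁ := hp₀.le.trans ((hlb 0).trans (hub 0))
  rcases le_total ρ x with hρx | hρx
  · have hsub : Icc ρ (x + 2 * l) ⊆ Icc a b := Icc_subset_Icc hρ.1 hxb
    have : x + l - ρ ≤ b - a := by linarith [hρ.1]
    exact ((hs.mono hsub).le_of_superlinear_right hp₀ hlb hub hs₀ hk hl hkl hρx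
      (fun r hr => hf r (hsub hr)) hyρ.le (hw _ ⟨by linarith, hxb⟩)
      fun r hr => hsup r ⟨by linarith [hr.1], hr.2⟩).trans (by gcongr)
  · have hsub : Icc (x - 2 * l) ρ ⊆ Icc a b := Icc_subset_Icc hax hρ.2
    have hs' := (hs.mono hsub).reflect
    rw [show -(x - 2 * l) = -x + 2 * l by ring] at hs'
    have hneg : ∀ r ∈ Icc (-ρ) (-x + 2 * l), -r ∈ Icc a b := fun r hr =>
      hsub ⟨by linarith [hr.2], by linarith [hr.1]⟩
    have hbound := hs'.le_of_superlinear_right hp₀ (fun r => hlb (-r)) (fun r => hub (-r)) hs₀ hk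
      hl hkl (neg_le_neg hρx) (fun r hr => hf (-r) (hneg r hr)) (by simp [hyρ])
      (hw _ (hneg _ (right_mem_Icc.2 (by linarith)))) fun r hr =>
        hsup (-r) ⟨by linarith [hr.2], by linarith [hr.1]⟩
    rw [neg_neg] at hbound
    have : -x + l - -ρ ≤ b - a := by linarith [hρ.2]
    exact hbound.trans (by gcongr)

end Superlinear

end IsRadialSol

/-! ### The shooting family -/

/-- The nonlinearity `Q h` modified for the shooting argument: the term `max (-s) 0` forces Neumann
solutions to be nonnegative, and `ν` is the parameter of a homotopy along which they disappear. -/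
noncomputable def shootingTerm (Q h : ℝ → ℝ) (ν r s : ℝ) : ℝ :=
  Q r * h s + max (-s) 0 + ν * max (Q r) 0

/-- `h` is nonnegative and grows at least like `L s` beyond the threshold `s₀`. -/
structure GrowsFrom (h : ℝ → ℝ) (L s₀ : ℝ) : Prop where
  nonneg : ∀ s, 0 ≤ h s
  threshold_nonneg : 0 ≤ s₀
  le : ∀ s, s₀ ≤ s → L * s ≤ h s

theorem GrowsFrom.anti {h : ℝ → ℝ} {L L' s₀ : ℝ} (hh : GrowsFrom h L s₀) (hL : L' ≤ L) :
    GrowsFrom h L' s₀ where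
  nonneg := hh.nonneg
  threshold_nonneg := hh.threshold_nonneg
  le s hs :=
    (mul_le_mul_of_nonneg_right hL (hh.threshold_nonneg.trans hs)).trans (hh.le s hs)

section Apriori

variable {a b p₀ p₁ q σ τ x ν r s : ℝ} {p Q h : ℝ → ℝ}

theorem shootingTerm_of_nonneg (hs : 0 ≤ s) :
    shootingTerm Q h ν r s = Q r * h s + ν * max (Q r) 0 := by
  rw [shootingTerm, max_eq_right (neg_nonpos.2 hs), add_zero]

theorem shootingTerm_nonpos (hQ : Q r ≤ 0) (hs : 0 ≤ s) (hh : 0 ≤ h s) :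
    shootingTerm Q h ν r s ≤ 0 := by
  rw [shootingTerm_of_nonneg hs, max_eq_right hQ, mul_zero, add_zero]
  exact mul_nonpos_of_nonpos_of_nonneg hQ hh

theorem le_shootingTerm (hν : 0 ≤ ν) : Q r * h s ≤ shootingTerm Q h ν r s := by
  unfold shootingTerm
  have : 0 ≤ ν * max (Q r) 0 := by positivity
  linarith [le_max_right (-s) 0]

theorem shootingTerm_pos (hν : 0 ≤ ν) (hs : s < 0) (hh : h s = 0) :
    0 < shootingTerm Q h ν r s := by
  have := neg_pos.2 hs
  rw [shootingTerm, hh, mul_zero, zero_add]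
  positivity

theorem exists_mem_Ioo_pos {ι : Type*} [Finite ι] {σ τ : ι → ℝ} (hab : a < b) (hQ : Continuous Q)
    (hoff : ∀ r ∈ Icc a b \ ⋃ i, Icc (σ i) (τ i), Q r ≤ 0) (i : ι) {ρ : ℝ} (hρ : ρ ∈ Icc a b)
    (hρj : ∀ j ≠ i, ρ ∉ Icc (σ j) (τ j)) (hQρ : 0 < Q ρ) : ∃ x ∈ Ioo (σ i) (τ i), 0 < Q x := by
  set S : Set ℝ := {r | 0 < Q r} ∩ (⋃ j ∈ {j | j ≠ i}, Icc (σ j) (τ j))ᶜ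
  have hS : IsOpen S := (isOpen_lt continuous_const hQ).inter
    ((toFinite _).isClosed_biUnion fun _ _ => isClosed_Icc).isOpen_compl
  have hρS : ρ ∈ S := ⟨hQρ, by simpa using hρj⟩
  obtain ⟨x, hxS, hxab⟩ := mem_closure_iff.1 (closure_Ioo hab.ne ▸ hρ) S hS hρS
  have hsub : S ∩ Ioo a b ⊆ Icc (σ i) (τ i) := by
    rintro r ⟨⟨hQr, hrj⟩, hr⟩
    by_contra hri
    refine (hoff r ⟨Ioo_subset_Icc_self hr, fun hrU => ?_⟩).not_gt hQr
    obtain ⟨j, hj⟩ := mem_iUnion.1 hrU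
    exact hrj (mem_iUnion₂.2 ⟨j, fun hji => hri (hji ▸ hj), hj⟩)
  have hxi := interior_maximal hsub (hS.inter isOpen_Ioo) ⟨hxS, hxab⟩
  exact ⟨x, interior_Icc (a := σ i) ▸ hxi, hxS.1⟩

theorem exists_window (hQ : Continuous Q) (hx : x ∈ Ioo σ τ) (hQx : 0 < Q x) :
    ∃ l > 0, σ ≤ x - 2 * l ∧ x + 2 * l ≤ τ ∧ ∀ r ∈ Icc (x - l) (x + l), Q x / 2 ≤ Q r := by
  obtain ⟨ε, hε, hsub⟩ := Metric.nhds_basis_closedBall.mem_iff.1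
    (inter_mem (Ioo_mem_nhds hx.1 hx.2) (hQ.continuousAt.eventually_const_le (half_lt_self hQx)))
  rw [Real.closedBall_eq_Icc] at hsub
  refine ⟨ε / 2, half_pos hε, ?_, ?_, fun r hr => (hsub ⟨?_, ?_⟩).2⟩
  · linarith [(hsub (left_mem_Icc.2 (by linarith))).1.1]
  · linarith [(hsub (right_mem_Icc.2 (by linarith))).1.2]
  · linarith [hr.1]
  · linarith [hr.2]

theorem exists_le_of_flux_eq_zero (hc : CoeffBounds p Q p₀ p₁ q) (hx : x ∈ Ioo σ τ)
    (hQx : 0 < Q x) (hQ : ∀ r ∈ Icc σ τ, 0 ≤ Q r) : ∃ L c : ℝ, ∀ ⦃h s₀ ν w y⦄,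
      GrowsFrom h L s₀ → 0 ≤ ν → IsRadialSol σ τ p (shootingTerm Q h ν) w y →
      (∀ r ∈ Icc σ τ, 0 ≤ w r) → ∀ ρ ∈ Icc σ τ, y ρ = 0 → w ρ ≤ c * s₀ := by
  obtain ⟨l, hl, hσl, hlτ, hQl⟩ := exists_window hc.continuous_coeff hx hQx
  have hp₀ := hc.p₀_pos
  have hp₁ := hc.p₁_pos
  set L := 4 * p₁ / (p₀ * Q x * l ^ 2)
  have hL : 0 < L := by positivity
  have hkl : p₁ < p₀ * (Q x / 2 * L) * l ^ 2 := by
    have : p₀ * (Q x / 2 * L) * l ^ 2 = 2 * p₁ := by simp only [L]; field_simp; norm_num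
    linarith
  refine ⟨L, 1 + p₁ * (τ - σ) / (p₀ * l), fun h s₀ ν w y hh hν hs hw ρ hρ hyρ => ?_⟩
  rw [mul_comm]
  refine IsRadialSol.le_of_superlinear hp₀ hc.le_weight hc.weight_le hh.threshold_nonneg
    (by positivity) hl hkl hs hσl hlτ (fun r hr => ?_) hw (fun r hr hsr => ?_) hρ hyρ
  · exact (mul_nonneg (hQ r hr) (hh.nonneg _)).trans (le_shootingTerm hν)
  · calc Q x / 2 * L * w r = Q x / 2 * (L * w r) := mul_assoc ..
      _ ≤ Q r * h (w r) := mul_le_mul (hQl r hr) (hh.le _ hsr)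
        (mul_nonneg hL.le (hh.threshold_nonneg.trans hsr)) ((half_pos hQx).le.trans (hQl r hr))
      _ ≤ shootingTerm Q h ν r (w r) := le_shootingTerm hν

theorem exists_apriori_bound (hc : CoeffBounds p Q p₀ p₁ q) (hab : a < b) (hq1 : CondQ1 a b Q) :
    ∃ L c : ℝ, ∀ ⦃h s₀ ν w y⦄, GrowsFrom h L s₀ → 0 ≤ ν →
      IsRadialSol a b p (shootingTerm Q h ν) w y → (∀ r ∈ Icc a b, 0 ≤ w r) →
      y a = 0 → y b = 0 → ∀ r ∈ Icc a b, w r ≤ c * s₀ := by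
  obtain ⟨m, σ, τ, hm, hστ, hdisj, hon, hpos, hoff⟩ := hq1
  have hsub (i : Fin m) : Icc (σ i) (τ i) ⊆ Icc a b := Icc_subset_Icc (hστ i).1 (hστ i).2.2
  have hlocal (i : Fin m) : ∃ x ∈ Ioo (σ i) (τ i), 0 < Q x := by
    obtain ⟨ρ, hρi, hQρ⟩ := hpos i
    exact exists_mem_Ioo_pos hab hc.continuous_coeff hoff i (hsub i hρi)
      (fun j hj hρj => disjoint_left.1 (hdisj hj) hρj hρi) hQρ
  choose x hx hQx using hlocal
  choose L c hLc using fun i => exists_le_of_flux_eq_zero hc (hx i) (hQx i) (hon i)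
  obtain ⟨L', hL'⟩ := Finite.exists_le L
  obtain ⟨c', hc'⟩ := Finite.exists_le c
  refine ⟨L', c', fun h s₀ ν w y hh hν hs hw hya hyb r hr => ?_⟩
  obtain ⟨j, hjJ, hmax⟩ := hs.exists_mem_isMaxOn hc.weight_pos
    (isCompact_iUnion fun i => isCompact_Icc) (iUnion_subset hsub)
    ⟨σ ⟨0, hm⟩, mem_iUnion.2 ⟨_, left_mem_Icc.2 (hστ _).2.1⟩⟩
    (fun r hr hrJ => shootingTerm_nonpos (hoff r ⟨hr, hrJ⟩) (hw r hr) (hh.nonneg _)) hya.ge hyb.le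
  obtain ⟨i, hji⟩ := mem_iUnion.1 hjJ
  have hyj : y j = 0 := by
    rcases eq_endpoints_or_mem_Ioo_of_mem_Icc (hsub i hji) with rfl | rfl | hj
    exacts [hya, hyb, hs.flux_eq_zero_of_isMaxOn hc.weight_pos hj hmax]
  calc w r ≤ w j := hmax hr
    _ ≤ c i * s₀ := hLc i (hh.anti (hL' i)) hν (hs.mono (hsub i))
      (fun r hr => hw r (hsub i hr)) j hji hyj
    _ ≤ c' * s₀ := mul_le_mul_of_nonneg_right (hc' i) hh.threshold_nonneg

end Apriori

/-! ### Integral identities: large parameter and small initial value -/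

section Integral

variable {a b p₀ p₁ q ν G δ r : ℝ} {p Q h w y : ℝ → ℝ} {f : ℝ → ℝ → ℝ} {κ : ℝ≥0}

theorem CoeffBounds.integral_posPart_pos (hc : CoeffBounds p Q p₀ p₁ q) (hab : a < b)
    (hQ : ∃ r ∈ Icc a b, 0 < Q r) : 0 < ∫ r in a..b, p r * max (Q r) 0 := by
  have hpc := hc.continuous_weight
  have hQc := hc.continuous_coeff
  refine intervalIntegral.integral_pos hab (by fun_prop)
    (fun r _ => mul_nonneg (hc.weight_pos r).le (le_max_right _ _)) ?_
  obtain ⟨r, hr, hQr⟩ := hQ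
  exact ⟨r, hr, mul_pos (hc.weight_pos r) (lt_max_of_lt_left hQr)⟩

theorem CoeffBounds.abs_integral_le (hc : CoeffBounds p Q p₀ p₁ q) (hab : a ≤ b) {u : ℝ → ℝ}
    (hu : ∀ r ∈ Icc a b, |u r| ≤ G) : |∫ r in a..b, p r * (Q r * u r)| ≤ p₁ * q * G * (b - a) := by
  rw [← abs_of_nonneg (sub_nonneg.2 hab), ← Real.norm_eq_abs]
  refine intervalIntegral.norm_integral_le_of_norm_le_const fun r hr => ?_
  rw [uIoc_of_le hab] at hr
  have hp₁ := hc.p₁_pos.le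
  have hq := hc.q_nonneg
  rw [norm_mul, norm_mul, Real.norm_of_nonneg (hc.weight_pos r).le, mul_assoc]
  gcongr
  exacts [hc.weight_le r, hc.abs_coeff_le r, hu r (Ioc_subset_Icc_self hr)]

theorem IsRadialSol.mul_integral_posPart_le (hs : IsRadialSol a b p (shootingTerm Q h ν) w y)
    (hc : CoeffBounds p Q p₀ p₁ q) (hab : a ≤ b) (hh : Continuous h)
    (hw : ∀ r ∈ Icc a b, 0 ≤ w r) (hG : ∀ r ∈ Icc a b, |h (w r)| ≤ G) (hya : y a = 0)
    (hyb : y b = 0) : ν * ∫ r in a..b, p r * max (Q r) 0 ≤ p₁ * q * G * (b - a) := by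
  have hpc := hc.continuous_weight
  have hQc := hc.continuous_coeff
  have hhw : ContinuousOn (fun r => h (w r)) (Icc a b) := hh.comp_continuousOn hs.continuousOn
  have hI₁ : ContinuousOn (fun r => p r * (Q r * h (w r))) (Icc a b) :=
    hpc.continuousOn.mul (hQc.continuousOn.mul hhw)
  have hI₂ : ContinuousOn (fun r => ν * (p r * max (Q r) 0)) (Icc a b) := by fun_prop
  have hsplit : ∀ r ∈ Icc a b, p r * (Q r * h (w r)) + ν * (p r * max (Q r) 0) =
      p r * shootingTerm Q h ν r (w r) := fun r hr => by
    rw [shootingTerm_of_nonneg (hw r hr)]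
    ring
  have hzero := hs.integral_eq hab ((hI₁.add hI₂).congr fun r hr => (hsplit r hr).symm)
  rw [hya, hyb, sub_zero, ← intervalIntegral.integral_congr fun r hr =>
    hsplit r (uIcc_of_le hab ▸ hr), intervalIntegral.integral_add
      (hI₁.intervalIntegrable_of_Icc hab) (hI₂.intervalIntegrable_of_Icc hab),
    intervalIntegral.integral_const_mul] at hzero
  linarith [(abs_le.1 (hc.abs_integral_le hab hG)).1]

theorem lt_of_forall_Icc_le_imp_lt {u : ℝ → ℝ} {c : ℝ} (hu : ContinuousOn u (Icc a b))
    (hua : u a < c) (hstep : ∀ r ∈ Icc a b, (∀ s ∈ Icc a r, u s ≤ c) → u r < c) :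
    ∀ r ∈ Icc a b, u r < c := by
  by_contra! hne
  have hcompact : IsCompact {r ∈ Icc a b | c ≤ u r} := isCompact_Icc.of_isClosed_subset
    (hu.preimage_isClosed_of_isClosed isClosed_Icc isClosed_Ici) (sep_subset _ _)
  obtain ⟨t, ⟨ht, hct⟩, hleast⟩ := hcompact.exists_isLeast hne
  have hsub : Icc a t ⊆ Icc a b := Icc_subset_Icc_right ht.2
  obtain ⟨s, hs, hus⟩ := intermediate_value_Icc ht.1 (hu.mono hsub) ⟨hua.le, hct⟩
  have hst : s = t := hs.2.antisymm (hleast ⟨hsub hs, hus.ge⟩)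
  refine (hstep t ht fun r hr => ?_).not_ge hct
  rcases hr.2.eq_or_lt with rfl | hrt
  · exact (hst ▸ hus).le
  · exact (not_le.1 fun hcr => hrt.not_ge (hleast ⟨hsub hr, hcr⟩)).le

/-- As long as `w` stays within `δ` of its initial value, the bound `C` on the nonlinearity keeps
it strictly closer; so it never leaves. -/
theorem IsRadialSol.abs_sub_lt (hs : IsRadialSol a b p f w y) (hc : CoeffBounds p Q p₀ p₁ q)
    (hya : y a = 0) {C : ℝ} (hδ : 0 < δ) (hC : p₁ * C * (b - a) ^ 2 / p₀ < δ)
    (hf : ∀ r ∈ Icc a b, ∀ s, |s - w a| ≤ δ → |f r s| ≤ C) :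
    ∀ r ∈ Icc a b, |w r - w a| < δ := by
  refine lt_of_forall_Icc_le_imp_lt (hs.continuousOn.sub continuousOn_const).abs
    (by simpa using hδ) fun r hr hle => ?_
  have hsub : Icc a r ⊆ Icc a b := Icc_subset_Icc_right hr.2
  have hC₀ : 0 ≤ C := (abs_nonneg _).trans (hf r hr (w a) (by simpa using hδ.le))
  have hp₀ := hc.p₀_pos
  have hp₁ := hc.p₁_pos
  have := sub_nonneg.2 hr.1
  calc |w r - w a| ≤ p₁ * C * (r - a) ^ 2 / p₀ := (hs.mono hsub).abs_sub_le hc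
        (fun s hs' => hf s (hsub hs') _ (hle s hs')) hya (right_mem_Icc.2 hr.1)
    _ ≤ p₁ * C * (b - a) ^ 2 / p₀ := by
        gcongr
        exact hr.2
    _ < δ := hC

section SmallShot

variable (hs : IsRadialSol a b p (fun r s => Q r * h s) w y) (hc : CoeffBounds p Q p₀ p₁ q)
  (hab : a ≤ b) (hw : ∀ r ∈ Icc a b, w r ∈ Icc 0 (2 * δ)) (hδ : 0 ≤ δ)
  (hh : LipschitzOnWith κ h (Icc 0 (2 * δ))) (hhδ : 0 ≤ h δ) (hwa : w a = δ) (hya : y a = 0)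
  (hκ : κ * (p₁ * q * (b - a) ^ 2 / p₀) ≤ 1 / 4)

include hs hc hab hw hδ hh hhδ hwa hya hκ

theorem IsRadialSol.abs_sub_le_mul : ∀ r ∈ Icc a b,
    |w r - δ| ≤ 2 * (p₁ * q * (b - a) ^ 2 / p₀) * h δ := by
  set B := p₁ * q * (b - a) ^ 2 / p₀ with hB
  have hB₀ : 0 ≤ B := by
    have := hc.p₀_pos
    have := hc.p₁_pos
    have := hc.q_nonneg
    positivity
  have hδ₂ : δ ∈ Icc 0 (2 * δ) := ⟨hδ, by linarith⟩
  obtain ⟨t, ht, hmax⟩ := isCompact_Icc.exists_isMaxOn (nonempty_Icc.2 hab)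
    (hs.continuousOn.sub continuousOn_const).abs
  have hle : ∀ r ∈ Icc a b, |w r - δ| ≤ |w t - δ| := fun r hr => hmax hr
  have hf : ∀ r ∈ Icc a b, |Q r * h (w r)| ≤ q * (h δ + κ * |w t - δ|) := fun r hr => by
    have hlip : |h (w r)| - |h δ| ≤ κ * |w r - δ| :=
      (abs_sub_abs_le_abs_sub _ _).trans (hh.dist_le_mul _ (hw r hr) _ hδ₂)
    rw [abs_of_nonneg hhδ] at hlip
    rw [abs_mul]
    refine mul_le_mul (hc.abs_coeff_le r) ?_ (abs_nonneg _) hc.q_nonneg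
    linarith [mul_le_mul_of_nonneg_left (hle r hr) κ.coe_nonneg]
  have hM : |w t - δ| ≤ B * (h δ + κ * |w t - δ|) := by
    have hwt := hs.abs_sub_le hc hf hya ht
    rwa [hwa, show p₁ * (q * (h δ + κ * |w t - δ|)) * (b - a) ^ 2 / p₀ =
      B * (h δ + κ * |w t - δ|) by rw [hB]; ring] at hwt
  intro r hr
  have := mul_le_mul_of_nonneg_right hκ (abs_nonneg (w t - δ))
  have := mul_nonneg hB₀ hhδ
  linarith [hle r hr]

theorem IsRadialSol.abs_flux_add_le : |y b + h δ * ∫ r in a..b, p r * Q r| ≤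
    κ * (p₁ * q * (2 * (p₁ * q * (b - a) ^ 2 / p₀)) * (b - a)) * h δ := by
  have hpc := hc.continuous_weight
  have hQc := hc.continuous_coeff
  have hδ₂ : δ ∈ Icc 0 (2 * δ) := ⟨hδ, by linarith⟩
  have hhw : ContinuousOn (fun r => h (w r)) (Icc a b) := hh.continuousOn.comp hs.continuousOn hw
  have hI₁ : ContinuousOn (fun r => p r * (Q r * h (w r))) (Icc a b) :=
    hpc.continuousOn.mul (hQc.continuousOn.mul hhw)
  have hI₂ : ContinuousOn (fun r => h δ * (p r * Q r)) (Icc a b) := by fun_prop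
  have hid : y b + h δ * ∫ r in a..b, p r * Q r =
      -∫ r in a..b, p r * (Q r * (h (w r) - h δ)) := by
    have hsub := intervalIntegral.integral_sub (hI₁.intervalIntegrable_of_Icc hab)
      (hI₂.intervalIntegrable_of_Icc (μ := volume) hab)
    rw [intervalIntegral.integral_const_mul, hs.integral_eq hab hI₁, hya] at hsub
    rw [intervalIntegral.integral_congr fun r _ =>
      show p r * (Q r * (h (w r) - h δ)) = p r * (Q r * h (w r)) - h δ * (p r * Q r) by ring, hsub]
    ring
  rw [hid, abs_neg]
  refine (hc.abs_integral_le hab (G := κ * (2 * (p₁ * q * (b - a) ^ 2 / p₀) * h δ))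
    fun r hr => ?_).trans_eq (by ring)
  refine (hh.dist_le_mul _ (hw r hr) _ hδ₂).trans ?_
  gcongr
  exact hs.abs_sub_le_mul hc hab hw hδ hh hhδ hwa hya hκ r hr

end SmallShot

theorem IsRadialSol.mem_Icc_of_small (hs : IsRadialSol a b p (shootingTerm Q h 0) w y)
    (hc : CoeffBounds p Q p₀ p₁ q) (hδ : 0 < δ) (hh : LipschitzOnWith κ h (Icc 0 (2 * δ)))
    (hh₀ : h 0 = 0) (hwa : w a = δ) (hya : y a = 0)
    (hκ : κ * (p₁ * q * (b - a) ^ 2 / p₀) ≤ 1 / 4) : ∀ r ∈ Icc a b, w r ∈ Icc 0 (2 * δ) := by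
  have hlt := hs.abs_sub_lt hc hya (C := q * (κ * (2 * δ))) hδ
    (by
      rw [show p₁ * (q * (κ * (2 * δ))) * (b - a) ^ 2 / p₀ =
        κ * (p₁ * q * (b - a) ^ 2 / p₀) * (2 * δ) by ring]
      linarith [mul_le_mul_of_nonneg_right hκ (by positivity : 0 ≤ 2 * δ)])
    fun r _ s hsδ => by
      rw [hwa, abs_le] at hsδ
      have hs₂ : s ∈ Icc 0 (2 * δ) := ⟨by linarith, by linarith⟩
      have hlip := hh.dist_le_mul s hs₂ 0 ⟨le_rfl, by linarith⟩
      rw [hh₀, dist_zero_right, dist_zero_right, Real.norm_of_nonneg hs₂.1] at hlip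
      rw [shootingTerm_of_nonneg hs₂.1, zero_mul, add_zero, abs_mul]
      exact mul_le_mul (hc.abs_coeff_le r) (hlip.trans (by gcongr; exact hs₂.2)) (abs_nonneg _)
        hc.q_nonneg
  intro r hr
  have h := abs_lt.1 (hwa ▸ hlt r hr)
  exact ⟨by linarith, by linarith⟩

theorem exists_forall_flux_pos (hc : CoeffBounds p Q p₀ p₁ q) (hab : a ≤ b)
    (hI : ∫ r in a..b, p r * Q r < 0) : ∃ κ : ℝ≥0, 0 < κ ∧ ∀ ⦃h δ w y⦄, 0 < δ →
      LipschitzOnWith κ h (Icc 0 (2 * δ)) → h 0 = 0 → 0 < h δ →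
      IsRadialSol a b p (shootingTerm Q h 0) w y → w a = δ → y a = 0 → 0 < y b := by
  set B := p₁ * q * (b - a) ^ 2 / p₀
  set D := p₁ * q * (2 * B) * (b - a)
  have hsmall (c : ℝ) {ε : ℝ} (hε : 0 < ε) : ∀ᶠ κ : ℝ≥0 in 𝓝[>] 0, κ * c < ε :=
    nhdsWithin_le_nhds ((by fun_prop : Continuous fun κ : ℝ≥0 => (κ : ℝ) * c).tendsto' 0 0
      (by simp) |>.eventually_lt_const hε)
  obtain ⟨κ, ⟨hκB, hκD⟩, hκ₀⟩ := ((hsmall B (by norm_num : (0 : ℝ) < 1 / 4)).and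
    (hsmall D (neg_pos.2 hI))).and self_mem_nhdsWithin |>.exists
  refine ⟨κ, hκ₀, fun h δ w y hδ hh hh₀ hhδ hs hwa hya => ?_⟩
  have hw := hs.mem_Icc_of_small hc hδ hh hh₀ hwa hya hκB.le
  have hs' : IsRadialSol a b p (fun r s => Q r * h s) w y := hs.congr fun r hr => by
    rw [shootingTerm_of_nonneg (hw r hr).1, zero_mul, add_zero]
  have herr := hs'.abs_flux_add_le hc hab hw hδ.le hh hhδ.le hwa hya hκB.le
  linarith [(abs_le.1 herr).1, mul_lt_mul_of_pos_right hκD hhδ]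

end Integral

/-! ### Shooting -/

/-- The shooting system for the state `(w, y, ν)`: the radial system together with `ν' = 0`, so that
the parameter becomes part of the initial value. -/
noncomputable def shootingField (p Q h : ℝ → ℝ) (r : ℝ) (x : ℝ × ℝ × ℝ) : ℝ × ℝ × ℝ :=
  (x.2.1 / p r, -(p r * shootingTerm Q h x.2.2 r x.1), 0)

section Shooting

variable {a b p₀ p₁ q A δ : ℝ} {p Q h : ℝ → ℝ} {K : ℝ≥0}

theorem continuous_shootingField (hc : CoeffBounds p Q p₀ p₁ q) (hh : Continuous h) :
    Continuous ↿(shootingField p Q h) := by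
  have hpc := hc.continuous_weight
  have hQc := hc.continuous_coeff
  have hp (x : ℝ × ℝ × ℝ × ℝ) : p x.1 ≠ 0 := (hc.weight_pos x.1).ne'
  unfold shootingField shootingTerm
  simp only [Function.HasUncurry.uncurry, id]
  fun_prop (disch := exact hp _)

theorem abs_shootingTerm_sub_le (hc : CoeffBounds p Q p₀ p₁ q) (hh : LipschitzWith K h)
    (r s s' ν ν' : ℝ) : |shootingTerm Q h ν r s - shootingTerm Q h ν' r s'| ≤
      (q * K + 1) * |s - s'| + q * |ν - ν'| := by
  have hq := hc.q_nonneg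
  have hhs : |Q r * (h s - h s')| ≤ q * (K * |s - s'|) := by
    rw [abs_mul]
    exact mul_le_mul (hc.abs_coeff_le r) (hh.dist_le_mul s s') (abs_nonneg _) hq
  have hmax : |max (-s) 0 - max (-s') 0| ≤ |s - s'| :=
    (abs_max_sub_max_le_abs _ _ _).trans_eq (by rw [neg_sub_neg, abs_sub_comm])
  have hν : |(ν - ν') * max (Q r) 0| ≤ q * |ν - ν'| := by
    rw [abs_mul, mul_comm, abs_of_nonneg (le_max_right (Q r) 0)]
    gcongr
    exact max_le ((le_abs_self _).trans (hc.abs_coeff_le r)) hq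
  calc |shootingTerm Q h ν r s - shootingTerm Q h ν' r s'|
      = |Q r * (h s - h s') + (max (-s) 0 - max (-s') 0) + (ν - ν') * max (Q r) 0| := by
        unfold shootingTerm
        ring_nf
    _ ≤ q * (K * |s - s'|) + |s - s'| + q * |ν - ν'| :=
        (abs_add_three _ _ _).trans (add_le_add_three hhs hmax hν)
    _ = (q * K + 1) * |s - s'| + q * |ν - ν'| := by ring

theorem exists_lipschitzWith_shootingField (hc : CoeffBounds p Q p₀ p₁ q)
    (hh : LipschitzWith K h) : ∃ C, ∀ r, LipschitzWith C (shootingField p Q h r) := by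
  have hp₀ := hc.p₀_pos
  have hp₁ := hc.p₁_pos
  have hq := hc.q_nonneg
  have hw (r : ℝ) : LipschitzWith (Real.toNNReal p₀⁻¹) fun x : ℝ × ℝ × ℝ => x.2.1 / p r :=
    LipschitzWith.of_dist_le' fun x x' => by
      rw [Real.dist_eq, ← sub_div, abs_div, abs_of_pos (hc.weight_pos r), div_eq_inv_mul]
      gcongr
      · exact hc.le_weight r
      · exact (le_max_left _ _).trans (le_max_right _ _)
  have hy (r : ℝ) : LipschitzWith (Real.toNNReal (p₁ * (q * K + 1 + q)))
      fun x : ℝ × ℝ × ℝ => -(p r * shootingTerm Q h x.2.2 r x.1) :=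
    LipschitzWith.of_dist_le' fun x x' => by
      have hs : |x.1 - x'.1| ≤ dist x x' := le_max_left _ _
      have hν : |x.2.2 - x'.2.2| ≤ dist x x' := (le_max_right _ _).trans (le_max_right _ _)
      rw [dist_neg_neg, Real.dist_eq, ← mul_sub, abs_mul, abs_of_pos (hc.weight_pos r), mul_assoc]
      gcongr
      · exact hc.weight_le r
      · calc |shootingTerm Q h x.2.2 r x.1 - shootingTerm Q h x'.2.2 r x'.1|
            ≤ (q * K + 1) * |x.1 - x'.1| + q * |x.2.2 - x'.2.2| :=
              abs_shootingTerm_sub_le hc hh ..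
          _ ≤ (q * K + 1) * dist x x' + q * dist x x' := by gcongr
          _ = (q * K + 1 + q) * dist x x' := by ring
  exact ⟨_, fun r => (hw r).prodMk ((hy r).prodMk (LipschitzWith.const 0))⟩

theorem hasDerivAt_fst_comp {E F : Type*} [NormedAddCommGroup E] [NormedSpace ℝ E]
    [NormedAddCommGroup F] [NormedSpace ℝ F] {u : ℝ → E × F} {u' : E × F} {t : ℝ}
    (hu : HasDerivAt u u' t) : HasDerivAt (fun s => (u s).1) u'.1 t := by
  simpa using hu.hasFDerivAt.fst.hasDerivAt

theorem hasDerivAt_snd_comp {E F : Type*} [NormedAddCommGroup E] [NormedSpace ℝ E]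
    [NormedAddCommGroup F] [NormedSpace ℝ F] {u : ℝ → E × F} {u' : E × F} {t : ℝ}
    (hu : HasDerivAt u u' t) : HasDerivAt (fun s => (u s).2) u'.2 t := by
  simpa using hu.hasFDerivAt.snd.hasDerivAt

theorem exists_shooting_family (hc : CoeffBounds p Q p₀ p₁ q) (hh : LipschitzWith K h)
    (hab : a ≤ b) : ∃ W Y : ℝ → ℝ → ℝ → ℝ,
      (∀ c ν, W c ν a = c ∧ Y c ν a = 0 ∧
        IsRadialSol a b p (shootingTerm Q h ν) (W c ν) (Y c ν)) ∧
      Continuous fun x : ℝ × ℝ => Y x.1 x.2 b := by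
  obtain ⟨C, hC⟩ := exists_lipschitzWith_shootingField hc hh
  obtain ⟨Φ, hΦa, hΦ, hΦb⟩ :=
    exists_continuous_flow (continuous_shootingField hc hh.continuous) hC hab
  refine ⟨fun c ν r => (Φ (c, 0, ν) r).1, fun c ν r => (Φ (c, 0, ν) r).2.1,
    fun c ν => ⟨congrArg Prod.fst (hΦa _), congrArg (fun x => x.2.1) (hΦa _), ?_⟩, ?_⟩
  · have hd := hΦ (c, 0, ν)
    have hν : ∀ r ∈ Icc a b, (Φ (c, 0, ν) r).2.2 = ν := fun r hr => by
      have hd₃ : ∀ s ∈ Icc a b, HasDerivAt (fun s => (Φ (c, 0, ν) s).2.2) 0 s := fun s hs =>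
        hasDerivAt_snd_comp (hasDerivAt_snd_comp (hd s hs))
      rw [constant_of_has_deriv_right_zero
        (fun s hs => (hd₃ s hs).continuousAt.continuousWithinAt)
        (fun s hs => (hd₃ s (Ico_subset_Icc_self hs)).hasDerivWithinAt) r hr, hΦa]
    refine ⟨fun r hr => hasDerivAt_fst_comp (hd r hr), fun r hr => ?_⟩
    simpa only [shootingField, hν r hr] using
      hasDerivAt_fst_comp (hasDerivAt_snd_comp (hd r hr))
  · exact (continuous_fst.comp continuous_snd).comp
      (hΦb.comp (by fun_prop : Continuous fun x : ℝ × ℝ => (x.1, (0 : ℝ), x.2)))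

theorem neg_of_forall_ne_zero {u : ℝ → ℝ} (hu : ContinuousOn u (uIcc a b))
    (hne : ∀ x ∈ uIcc a b, u x ≠ 0) (ha : u a < 0) : u b < 0 := by
  by_contra! hb
  obtain ⟨x, hx, hux⟩ := intermediate_value_uIcc hu (mem_uIcc_of_le ha.le hb)
  exact hne x hx hux

theorem exists_eq_zero_of_homotopy {F : ℝ × ℝ → ℝ} {c₀ c₁ ν₀ : ℝ} (hF : Continuous F)
    (hc₀ : F (c₀, ν₀) < 0) (hν₀ : ∀ c, F (c, ν₀) ≠ 0) (h₀ : 0 ≤ ν₀)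
    (hc₁ : ∀ ν, 0 ≤ ν → F (c₁, ν) ≠ 0) (hδ : δ ≤ c₁) (hFδ : 0 ≤ F (δ, 0)) :
    ∃ c ∈ Icc δ c₁, F (c, 0) = 0 := by
  have hcorner : F (c₁, ν₀) < 0 :=
    neg_of_forall_ne_zero (u := fun c => F (c, ν₀)) (by fun_prop) (fun c _ => hν₀ c) hc₀
  have hend : F (c₁, 0) < 0 :=
    neg_of_forall_ne_zero (u := fun ν => F (c₁, ν)) (by fun_prop)
      (fun ν hν => hc₁ ν (uIcc_of_ge h₀ ▸ hν).1) hcorner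
  exact intermediate_value_Icc' hδ (f := fun c => F (c, 0)) (by fun_prop) ⟨hend.le, hFδ⟩

theorem IsRadialSol.nonneg_of_shootingTerm {w y : ℝ → ℝ} {ν : ℝ}
    (hs : IsRadialSol a b p (shootingTerm Q h ν) w y) (hp : ∀ r, 0 < p r) (hab : a < b)
    (hh₀ : ∀ s ≤ 0, h s = 0) (hν : 0 ≤ ν) (hya : y a ≤ 0) (hyb : 0 ≤ y b) :
    ∀ r ∈ Icc a b, 0 ≤ w r :=
  hs.nonneg hp hab (fun _ _ hwr => shootingTerm_pos hν hwr (hh₀ _ hwr.le)) hya hyb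

theorem exists_neumann_of_lipschitzWith (hc : CoeffBounds p Q p₀ p₁ q) (hab : a < b)
    (hQ : ∃ r ∈ Icc a b, 0 < Q r) (hh : LipschitzWith K h) (hh₀ : ∀ s ≤ 0, h s = 0)
    (hA : ∀ ⦃ν w y⦄, 0 ≤ ν → IsRadialSol a b p (shootingTerm Q h ν) w y →
      (∀ r ∈ Icc a b, 0 ≤ w r) → y a = 0 → y b = 0 → ∀ r ∈ Icc a b, w r ≤ A)
    (hδ : ∀ ⦃w y⦄, IsRadialSol a b p (shootingTerm Q h 0) w y → w a = δ → y a = 0 → 0 < y b) :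
    ∃ w y, IsRadialSol a b p (fun r s => Q r * h s) w y ∧ y a = 0 ∧ y b = 0 ∧ δ ≤ w a ∧
      ∀ r ∈ Icc a b, w r ∈ Icc 0 A := by
  obtain ⟨W, Y, hWY, hcont⟩ := exists_shooting_family hc hh hab.le
  have hW {c ν : ℝ} (hν : 0 ≤ ν) (hY : Y c ν b = 0) : ∀ r ∈ Icc a b, W c ν r ∈ Icc 0 A := by
    obtain ⟨-, hya, hs⟩ := hWY c ν
    have h₀ := hs.nonneg_of_shootingTerm hc.weight_pos hab hh₀ hν hya.le hY.ge
    exact fun r hr => ⟨h₀ r hr, hA hν hs h₀ hya hY r hr⟩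
  have ha : a ∈ Icc a b := left_mem_Icc.2 hab.le
  obtain ⟨G, hG⟩ :=
    isCompact_Icc.exists_bound_of_continuousOn (s := Icc 0 A) hh.continuous.continuousOn
  have hpos := hc.integral_posPart_pos hab hQ
  obtain ⟨ν₀, hν₀, hlarge⟩ :
      ∃ ν₀ ≥ 0, p₁ * q * G * (b - a) < ν₀ * ∫ r in a..b, p r * max (Q r) 0 :=
    ((eventually_ge_atTop 0).and
      ((tendsto_id.atTop_mul_const hpos).eventually_gt_atTop _)).exists
  have hleft : Y (-1) ν₀ b < 0 := by
    obtain ⟨hwa, hya, hs⟩ := hWY (-1) ν₀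
    by_contra! hyb
    have := hs.nonneg_of_shootingTerm hc.weight_pos hab hh₀ hν₀ hya.le hyb a ha
    linarith
  have htop (c : ℝ) : Y c ν₀ b ≠ 0 := fun hYc =>
    have hw := hW hν₀ hYc
    ((hWY c ν₀).2.2.mul_integral_posPart_le hc hab.le hh.continuous (fun r hr => (hw r hr).1)
      (fun r hr => hG _ (hw r hr)) (hWY c ν₀).2.1 hYc).not_gt hlarge
  have hright (ν : ℝ) (hν : 0 ≤ ν) : Y (max A δ + 1) ν b ≠ 0 := fun hYν => by
    linarith [(hW hν hYν a ha).2, (hWY (max A δ + 1) ν).1, le_max_left A δ]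
  have hbase : 0 < Y δ 0 b := hδ (hWY δ 0).2.2 (hWY δ 0).1 (hWY δ 0).2.1
  obtain ⟨c, hcδ, hYc⟩ := exists_eq_zero_of_homotopy hcont hleft htop hν₀ hright
    (by linarith [le_max_right A δ]) hbase.le
  refine ⟨W c 0, Y c 0, (hWY c 0).2.2.congr fun r hr => ?_, (hWY c 0).2.1, hYc,
    hcδ.1.trans_eq (hWY c 0).1.symm, hW le_rfl hYc⟩
  rw [shootingTerm_of_nonneg (hW le_rfl hYc r hr).1, zero_mul, add_zero]

end Shooting

/-! ### Lipschitz approximation of the nonlinearity -/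

theorem lipschitzOnWith_of_eqOn {α β : Type*} [PseudoEMetricSpace α] [PseudoEMetricSpace β]
    {f g : α → β} {K : ℝ≥0} {s : Set α} (hf : LipschitzOnWith K f s) (h : EqOn g f s) :
    LipschitzOnWith K g s := fun x hx y hy => by
  rw [h hx, h hy]
  exact hf hx hy

section Approximation

variable {f : ℝ → ℝ} {K κ : ℝ≥0} {L ε s s₀ : ℝ}

theorem lipEnvelope_eq_of_lipschitzOnWith (hf : ∀ t, 0 ≤ f t) (hf₀ : ∀ t ≤ 0, f t = 0)
    (hκ : LipschitzOnWith κ f (Icc 0 ε)) (hK : κ ≤ K) (hs : s ∈ Icc 0 (ε / 2)) :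
    lipEnvelope f K s = f s := by
  have hlip {t : ℝ} (ht : t ∈ Icc 0 ε) : f s ≤ f t + K * dist s t :=
    (hκ.le_add_mul ⟨hs.1, by linarith [hs.1, hs.2]⟩ ht).trans (by gcongr)
  refine (lipEnvelope_le hf s).antisymm (le_lipEnvelope fun t => ?_)
  have hε : 0 ≤ ε := by linarith [hs.1, hs.2]
  by_cases ht : t ∈ Icc 0 ε
  · exact hlip ht
  -- outside `[0, ε]`, the origin is at least as good a competitor as `t`
  have hst : dist s 0 ≤ dist s t := by
    rw [Real.dist_0_eq_abs, abs_of_nonneg hs.1, Real.dist_eq]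
    rcases lt_or_ge t 0 with ht0 | ht0
    · exact le_abs.2 (.inl (by linarith))
    · have : ε < t := not_le.1 fun h => ht ⟨ht0, h⟩
      exact le_abs.2 (.inr (by linarith [hs.2]))
  calc f s ≤ f 0 + K * dist s 0 := hlip (left_mem_Icc.2 hε)
    _ ≤ f t + K * dist s t := by
      rw [hf₀ 0 le_rfl]
      gcongr
      exact hf t

theorem GrowsFrom.lipEnvelope (hf : GrowsFrom f L s₀) (hL : 0 ≤ L) (hK : L ≤ K) :
    GrowsFrom (lipEnvelope f K) (L / 2) (2 * s₀) where
  nonneg := lipEnvelope_nonneg hf.nonneg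
  threshold_nonneg := mul_nonneg zero_le_two hf.threshold_nonneg
  le s hs := le_lipEnvelope fun t => by
    have hs₀ := hf.threshold_nonneg
    have hdist : s - t ≤ dist s t := le_abs_self _
    rcases le_or_gt (s / 2) t with ht | ht
    · calc L / 2 * s = L * (s / 2) := by ring
        _ ≤ L * t := by gcongr
        _ ≤ f t := hf.le t (by linarith)
        _ ≤ f t + K * dist s t := le_add_of_nonneg_right (by positivity)
    · calc L / 2 * s = L * (s / 2) := by ring
        _ ≤ K * dist s t := by
          gcongr
          · linarith
          · linarith
        _ ≤ f t + K * dist s t := le_add_of_nonneg_left (hf.nonneg t)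

end Approximation

/-! ### Passage to the limit and positivity -/

/-- The vector field of the first-order system for `(w, y)` behind `IsRadialSol`. -/
noncomputable def radialField (p : ℝ → ℝ) (f : ℝ → ℝ → ℝ) (r : ℝ) (x : ℝ × ℝ) : ℝ × ℝ :=
  (x.2 / p r, -(p r * f r x.1))

section Limit

variable {a b p₀ p₁ q A G ε t : ℝ} {p Q g w y : ℝ → ℝ} {f : ℝ → ℝ → ℝ} {κ : ℝ≥0}

theorem IsRadialSol.hasDerivAt_prodMk (hs : IsRadialSol a b p f w y) (ht : t ∈ Icc a b) :
    HasDerivAt (fun r => (w r, y r)) (radialField p f t (w t, y t)) t :=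
  (hs.hasDerivAt t ht).prodMk (hs.hasDerivAt_flux t ht)

theorem continuous_radialField (hc : CoeffBounds p Q p₀ p₁ q) (hg : Continuous g) :
    Continuous ↿(radialField p fun r s => Q r * g s) := by
  have hpc := hc.continuous_weight
  have hQc := hc.continuous_coeff
  have hp (x : ℝ × ℝ × ℝ) : p x.1 ≠ 0 := (hc.weight_pos x.1).ne'
  unfold radialField
  simp only [Function.HasUncurry.uncurry, id]
  fun_prop (disch := exact hp _)

theorem lipschitzOnWith_radialField (hc : CoeffBounds p Q p₀ p₁ q) {s : Set ℝ}
    (hg : LipschitzOnWith κ g s) :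
    ∃ C, ∀ r, LipschitzOnWith C (radialField p (fun r s => Q r * g s) r) (Prod.fst ⁻¹' s) := by
  have hp₀ := hc.p₀_pos
  have hp₁ := hc.p₁_pos
  have hq := hc.q_nonneg
  have hw (r : ℝ) : LipschitzWith (Real.toNNReal p₀⁻¹) fun x : ℝ × ℝ => x.2 / p r :=
    LipschitzWith.of_dist_le' fun x x' => by
      rw [Real.dist_eq, ← sub_div, abs_div, abs_of_pos (hc.weight_pos r), div_eq_inv_mul]
      gcongr
      · exact hc.le_weight r
      · exact le_max_right _ _
  have hy (r : ℝ) : LipschitzOnWith (Real.toNNReal (p₁ * (q * κ)))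
      (fun x : ℝ × ℝ => -(p r * (Q r * g x.1))) (Prod.fst ⁻¹' s) :=
    LipschitzOnWith.of_dist_le' fun x hx x' hx' => by
      rw [dist_neg_neg, Real.dist_eq, ← mul_sub, abs_mul, abs_of_pos (hc.weight_pos r), ← mul_sub,
        abs_mul, mul_assoc, mul_assoc]
      gcongr
      · exact hc.weight_le r
      · exact hc.abs_coeff_le r
      · exact (hg.dist_le_mul _ hx _ hx').trans (by gcongr; exact le_max_left _ _)
  exact ⟨_, fun r => (hw r).lipschitzOnWith.prodMk (hy r)⟩

theorem norm_radialField_le (hc : CoeffBounds p Q p₀ p₁ q) {r C Y : ℝ} {x : ℝ × ℝ}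
    (hY : |x.2| ≤ Y) (hC : |f r x.1| ≤ C) :
    ‖radialField p f r x‖ ≤ max (Y / p₀) (p₁ * C) := by
  refine max_le_max ?_ ?_ <;> dsimp only [radialField]
  · rw [Real.norm_eq_abs, abs_div, abs_of_pos (hc.weight_pos r)]
    exact div_le_div₀ ((abs_nonneg _).trans hY) hY hc.p₀_pos (hc.le_weight r)
  · rw [Real.norm_eq_abs, abs_neg, abs_mul, abs_of_pos (hc.weight_pos r)]
    exact mul_le_mul (hc.weight_le r) hC (abs_nonneg _) hc.p₁_pos.le

theorem tendsto_radialField {ι : Type*} {l : Filter ι} {h : ι → ℝ → ℝ} {r : ℝ} {x : ℝ × ℝ}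
    (hh : Tendsto (fun z : ι × ℝ => h z.1 z.2) (l ×ˢ 𝓝 x.1) (𝓝 (g x.1))) :
    Tendsto (fun z : ι × ℝ × ℝ => radialField p (fun r s => Q r * h z.1 s) r z.2) (l ×ˢ 𝓝 x)
      (𝓝 (radialField p (fun r s => Q r * g s) r x)) := by
  have hfst : Tendsto (fun z : ι × ℝ × ℝ => (z.1, z.2.1)) (l ×ˢ 𝓝 x) (l ×ˢ 𝓝 x.1) :=
    tendsto_fst.prodMk ((continuous_fst.tendsto x).comp tendsto_snd)
  have hsnd : Tendsto (fun z : ι × ℝ × ℝ => z.2.2) (l ×ˢ 𝓝 x) (𝓝 x.2) :=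
    (continuous_snd.tendsto x).comp tendsto_snd
  exact (hsnd.div_const _).prodMk_nhds (((hh.comp hfst).const_mul _).const_mul _).neg

theorem exists_subseq_tendsto_isRadialSol (hc : CoeffBounds p Q p₀ p₁ q) (hab : a ≤ b)
    {h : ℕ → ℝ → ℝ} {w y : ℕ → ℝ → ℝ} (hh : ∀ n, Continuous (h n)) (hg : Continuous g)
    (hhg : ∀ s, Tendsto (fun x : ℕ × ℝ => h x.1 x.2) (atTop ×ˢ 𝓝 s) (𝓝 (g s)))
    (hs : ∀ n, IsRadialSol a b p (fun r s => Q r * h n s) (w n) (y n)) (hya : ∀ n, y n a = 0)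
    (hA : ∀ n, ∀ r ∈ Icc a b, w n r ∈ Icc 0 A) (hG : ∀ n, ∀ r ∈ Icc a b, |h n (w n r)| ≤ G) :
    ∃ φ : ℕ → ℕ, StrictMono φ ∧ ∃ w' y', IsRadialSol a b p (fun r s => Q r * g s) w' y' ∧
      ∀ r ∈ Icc a b, Tendsto (fun n => w (φ n) r) atTop (𝓝 (w' r)) ∧
        Tendsto (fun n => y (φ n) r) atTop (𝓝 (y' r)) := by
  have hterm (n : ℕ) : ∀ r ∈ Icc a b, |Q r * h n (w n r)| ≤ q * G := fun r hr => by
    rw [abs_mul]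
    exact mul_le_mul (hc.abs_coeff_le r) (hG n r hr) (abs_nonneg _) hc.q_nonneg
  set Y := p₁ * (q * G) * (b - a)
  have hy (n : ℕ) : ∀ r ∈ Icc a b, |y n r| ≤ Y := fun r hr =>
    (hs n).abs_flux_le hc (hterm n) (hya n) hr
  obtain ⟨φ, u, hmono, hu, hφ⟩ := exists_subseq_tendsto_hasDerivAt (X := fun n r => (w n r, y n r))
    hab (fun n => continuous_radialField hc (hh n)) (continuous_radialField hc hg)
    (fun _ _ x => tendsto_radialField (hhg x.1)) (fun n r hr => (hs n).hasDerivAt_prodMk hr)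
    (fun n r hr =>
      (norm_radialField_le hc (hy n r hr) (hterm n r hr)).trans (Real.le_coe_toNNReal _))
    (isCompact_Icc.prod (isCompact_Icc (a := -Y) (b := Y)))
    fun n r hr => ⟨hA n r hr, abs_le.1 (hy n r hr)⟩
  exact ⟨φ, hmono, fun r => (u r).1, fun r => (u r).2,
    ⟨fun r hr => hasDerivAt_fst_comp (hu r hr), fun r hr => hasDerivAt_snd_comp (hu r hr)⟩,
    fun r hr => ⟨(continuous_fst.tendsto _).comp (hφ r hr),
      (continuous_snd.tendsto _).comp (hφ r hr)⟩⟩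

theorem IsRadialSol.left_eq_zero_of_right_eq_zero (hc : CoeffBounds p Q p₀ p₁ q)
    (hs : IsRadialSol a b p (fun r s => Q r * g s) w y) (hab : a ≤ b)
    (hg : LipschitzOnWith κ g (Icc 0 ε)) (hg₀ : g 0 = 0) (hw : ∀ r ∈ Ioc a b, w r ∈ Icc 0 ε)
    (hwb : w b = 0) (hyb : y b = 0) : w a = 0 := by
  rcases hab.eq_or_lt with rfl | hab
  · exact hwb
  obtain ⟨C, hC⟩ := lipschitzOnWith_radialField hc hg
  have hε : 0 ∈ Icc 0 ε := hwb ▸ hw b (right_mem_Ioc.2 hab)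
  have hzero (t : ℝ) : HasDerivWithinAt (fun _ => (0 : ℝ × ℝ))
      (radialField p (fun r s => Q r * g s) t 0) (Iic t) t := by
    have h₀ : radialField p (fun r s => Q r * g s) t 0 = 0 := by simp [radialField, hg₀]
    rw [h₀]
    exact hasDerivWithinAt_const t (Iic t) (0 : ℝ × ℝ)
  have huniq := ODE_solution_unique_of_mem_Icc_left (fun t _ => hC t)
    (fun t ht => (hs.hasDerivAt_prodMk ht).continuousAt.continuousWithinAt)
    (fun t ht => (hs.hasDerivAt_prodMk (Ioc_subset_Icc_self ht)).hasDerivWithinAt) hw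
    continuousOn_const (fun t _ => hzero t) (fun _ _ => hε) (Prod.ext hwb hyb)
  exact congrArg Prod.fst (huniq (left_mem_Icc.2 hab.le))

theorem IsRadialSol.pos_of_lipschitzOnWith (hc : CoeffBounds p Q p₀ p₁ q)
    (hs : IsRadialSol a b p (fun r s => Q r * g s) w y) (hε : 0 < ε)
    (hg : LipschitzOnWith κ g (Icc 0 ε)) (hg₀ : g 0 = 0) (hw : ∀ r ∈ Icc a b, 0 ≤ w r)
    (hwa : 0 < w a) (hyb : y b = 0) : ∀ r ∈ Icc a b, 0 < w r := by
  intro r₀ hr₀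
  refine (hw r₀ hr₀).lt_of_ne' fun hwr₀ => ?_
  have har₀ : a < r₀ := hr₀.1.lt_of_ne fun h => hwa.ne' (h ▸ hwr₀)
  have hyr₀ : y r₀ = 0 := by
    rcases hr₀.2.eq_or_lt with rfl | hr₀b
    · exact hyb
    · have hmax : IsMaxOn (-w) (Icc a b) r₀ := fun r hr => by simpa [hwr₀] using hw r hr
      exact neg_eq_zero.1 (hs.neg.flux_eq_zero_of_isMaxOn hc.weight_pos ⟨har₀, hr₀b⟩ hmax)
  have hsub : Icc a r₀ ⊆ Icc a b := Icc_subset_Icc_right hr₀.2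
  -- after its last visit to the height `η`, `w` stays where `g` is Lipschitz
  set η := min ε (w a)
  have hη : 0 < η := lt_min hε hwa
  obtain ⟨t, ⟨ht, hηt⟩, hlast⟩ : ∃ t, IsGreatest (Icc a r₀ ∩ w ⁻¹' Ici η) t :=
    (isCompact_Icc.of_isClosed_subset
      ((hs.mono hsub).continuousOn.preimage_isClosed_of_isClosed isClosed_Icc isClosed_Ici)
      inter_subset_left).exists_isGreatest ⟨a, left_mem_Icc.2 har₀.le, min_le_right ε (w a)⟩
  have hbelow : ∀ r ∈ Ioc t r₀, w r ∈ Icc 0 ε := fun r hr => by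
    have har : r ∈ Icc a r₀ := ⟨ht.1.trans hr.1.le, hr.2⟩
    have hrη : w r < η := not_le.1 fun h => hr.1.not_ge (hlast ⟨har, h⟩)
    exact ⟨hw r (hsub har), hrη.le.trans (min_le_left _ _)⟩
  have hwt := (hs.mono ((Icc_subset_Icc_left ht.1).trans hsub)).left_eq_zero_of_right_eq_zero hc
    ht.2 hg hg₀ hbelow hwr₀ hyr₀
  exact hη.not_ge (hwt ▸ hηt)

end Limit

/-! ### Existence for weighted equations -/

section Existence

variable {a b p₀ p₁ q A δ : ℝ} {p Q f g : ℝ → ℝ} {K₀ : ℝ≥0}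

theorem CondQ1.exists_mem_pos (hq1 : CondQ1 a b Q) : ∃ r ∈ Icc a b, 0 < Q r := by
  obtain ⟨m, σ, τ, hm, hστ, -, -, hpos, -⟩ := hq1
  obtain ⟨r, hr, hQr⟩ := hpos ⟨0, hm⟩
  exact ⟨r, Icc_subset_Icc (hστ _).1 (hστ _).2.2 hr, hQr⟩

theorem exists_neumann_lipEnvelope (hc : CoeffBounds p Q p₀ p₁ q) (hab : a < b)
    (hq1 : CondQ1 a b Q) (hI : ∫ r in a..b, p r * Q r < 0) :
    ∃ κ : ℝ≥0, 0 < κ ∧ ∃ Λ : ℝ≥0, ∃ c : ℝ, ∀ ⦃f : ℝ → ℝ⦄ ⦃ε s₀ : ℝ⦄, (∀ s ≤ 0, f s = 0) →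
      (∀ s, 0 < s → 0 < f s) → 0 < ε → LipschitzOnWith κ f (Icc 0 ε) → GrowsFrom f Λ s₀ →
      ∀ K, κ ≤ K → Λ ≤ K → ∃ w y, IsRadialSol a b p (fun r s => Q r * lipEnvelope f K s) w y ∧
        y a = 0 ∧ y b = 0 ∧ ε / 4 ≤ w a ∧ ∀ r ∈ Icc a b, w r ∈ Icc 0 (c * s₀) := by
  obtain ⟨L, c, hapriori⟩ := exists_apriori_bound hc hab hq1
  obtain ⟨κ, hκ, hflux⟩ := exists_forall_flux_pos hc hab.le hI
  refine ⟨κ, hκ, 2 * L.toNNReal, c * 2, fun f ε s₀ hf₀ hfpos hε hlip hgrow K hκK hΛK => ?_⟩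
  have hL : L ≤ ↑(2 * L.toNNReal) / 2 := by simp
  have hKgrow : GrowsFrom (lipEnvelope f K) L (2 * s₀) :=
    (hgrow.lipEnvelope NNReal.zero_le_coe hΛK).anti hL
  have hK₀ : ∀ s ≤ 0, lipEnvelope f K s = 0 := fun s hs =>
    ((lipEnvelope_le hgrow.nonneg s).trans_eq (hf₀ s hs)).antisymm (hKgrow.nonneg s)
  have hKeq : ∀ s ∈ Icc 0 (ε / 2), lipEnvelope f K s = f s := fun s hs =>
    lipEnvelope_eq_of_lipschitzOnWith hgrow.nonneg hf₀ hlip hκK hs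
  refine exists_neumann_of_lipschitzWith hc hab hq1.exists_mem_pos
    (lipschitzWith_lipEnvelope hgrow.nonneg K) hK₀ (fun ν w y hν hs hw hya hyb r hr => ?_)
    fun w y => hflux (by positivity) ?_ (hK₀ 0 le_rfl) ?_
  · exact (hapriori hKgrow hν hs hw hya hyb r hr).trans_eq (mul_assoc c 2 s₀).symm
  · rw [show 2 * (ε / 4) = ε / 2 by ring]
    exact lipschitzOnWith_of_eqOn (hlip.mono (Icc_subset_Icc_right (half_le_self hε.le))) hKeq
  · rw [hKeq (ε / 4) ⟨by linarith, by linarith⟩]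
    exact hfpos _ (by positivity)

theorem exists_neumann_of_lipEnvelope (hc : CoeffBounds p Q p₀ p₁ q) (hab : a ≤ b)
    (hf : Continuous f) (hf₀ : ∀ s, 0 ≤ f s)
    (hsol : ∀ K, K₀ ≤ K → ∃ w y, IsRadialSol a b p (fun r s => Q r * lipEnvelope f K s) w y ∧
      y a = 0 ∧ y b = 0 ∧ δ ≤ w a ∧ ∀ r ∈ Icc a b, w r ∈ Icc 0 A) :
    ∃ w y, IsRadialSol a b p (fun r s => Q r * f s) w y ∧
      y a = 0 ∧ y b = 0 ∧ δ ≤ w a ∧ ∀ r ∈ Icc a b, w r ∈ Icc 0 A := by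
  have hK : Tendsto (fun n : ℕ => K₀ + n) atTop atTop :=
    tendsto_atTop_mono (fun _ => le_add_self) tendsto_natCast_atTop_atTop
  choose w y hs hya hyb hδ hA using fun n : ℕ => hsol (K₀ + n) le_self_add
  obtain ⟨G, hG⟩ := isCompact_Icc.bddAbove_image (hf.continuousOn (s := Icc 0 A))
  have hbound : ∀ n : ℕ, ∀ r ∈ Icc a b, |lipEnvelope f (K₀ + n) (w n r)| ≤ G := fun n r hr =>
    (abs_of_nonneg (lipEnvelope_nonneg hf₀ _)).trans_le
      ((lipEnvelope_le hf₀ _).trans (hG (mem_image_of_mem f (hA n r hr))))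
  obtain ⟨φ, -, w', y', hs', hlim⟩ := exists_subseq_tendsto_isRadialSol hc hab
    (fun n => (lipschitzWith_lipEnvelope hf₀ _).continuous) hf
    (fun s => tendsto_lipEnvelope hf₀ hf.continuousAt hK) hs hya hA hbound
  have hflux {r : ℝ} (hr : r ∈ Icc a b) (hy : ∀ n, y n r = 0) : y' r = 0 :=
    tendsto_nhds_unique (hlim r hr).2 (by simp only [hy, tendsto_const_nhds])
  have ha := left_mem_Icc.2 hab
  exact ⟨w', y', hs', hflux ha hya, hflux (right_mem_Icc.2 hab) hyb,
    ge_of_tendsto' (hlim a ha).1 fun n => hδ (φ n), fun r hr =>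
      isClosed_Icc.mem_of_tendsto (hlim r hr).1 (.of_forall fun n => hA (φ n) r hr)⟩

theorem exists_pos_neumann (hc : CoeffBounds p Q p₀ p₁ q) (hab : a < b) (hq1 : CondQ1 a b Q)
    (hI : ∫ r in a..b, p r * Q r < 0) :
    ∃ κ : ℝ≥0, 0 < κ ∧ ∃ Λ : ℝ, ∀ g, CondG1 g → (∃ ε > 0, LipschitzOnWith κ g (Icc 0 ε)) →
      (∀ᶠ s in atTop, Λ * s ≤ g s) → ∃ w y, IsRadialSol a b p (fun r s => Q r * g s) w y ∧
        y a = 0 ∧ y b = 0 ∧ ∀ r ∈ Icc a b, 0 < w r := by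
  obtain ⟨κ, hκ, Λ, c, hexists⟩ := exists_neumann_lipEnvelope hc hab hq1 hI
  refine ⟨κ, hκ, Λ, fun g ⟨hgc, hgnonneg, hg₀, hgpos⟩ ⟨ε, hε, hlip⟩ hgrow => ?_⟩
  obtain ⟨s₁, hs₁⟩ := eventually_atTop.1 hgrow
  set f : ℝ → ℝ := fun s => g (max s 0)
  have hfg : ∀ s, 0 ≤ s → f s = g s := fun s hs => by simp only [f, max_eq_left hs]
  have hf : Continuous f :=
    hgc.comp_continuous (continuous_id.max continuous_const) fun s => le_max_right s 0
  have hf₀ : ∀ s ≤ 0, f s = 0 := fun s hs => by simp only [f, max_eq_right hs, hg₀]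
  have hfpos : ∀ s, 0 < s → 0 < f s := fun s hs => (hfg s hs.le).symm ▸ hgpos s hs
  have hflip : LipschitzOnWith κ f (Icc 0 ε) := lipschitzOnWith_of_eqOn hlip fun s hs => hfg s hs.1
  have hfgrow : GrowsFrom f Λ (max s₁ 0) :=
    ⟨fun s => hgnonneg _ (le_max_right s 0), le_max_right s₁ 0, fun s hs =>
      (hs₁ s ((le_max_left _ _).trans hs)).trans_eq (hfg s ((le_max_right _ _).trans hs)).symm⟩
  obtain ⟨w, y, hs, hya, hyb, hδ, hA⟩ := exists_neumann_of_lipEnvelope (K₀ := max κ Λ) hc hab.le hf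
    hfgrow.nonneg fun K hK => hexists hf₀ hfpos hε hflip hfgrow K
      ((le_max_left _ _).trans hK) ((le_max_right _ _).trans hK)
  have hw : ∀ r ∈ Icc a b, 0 < w r := hs.pos_of_lipschitzOnWith hc hε hflip (hf₀ 0 le_rfl)
    (fun r hr => (hA r hr).1) ((div_pos hε four_pos).trans_le hδ) hyb
  exact ⟨w, y, hs.congr fun r hr => by rw [hfg _ (hw r hr).le], hya, hyb, hw⟩

end Existence

/-! ### Radial solutions on the annulus -/

section Annulus

variable {a b Λ ε : ℝ} {p Q Q' f g g' w y : ℝ → ℝ} {κ : ℝ≥0}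

theorem exists_coeffBounds_eqOn (hab : a ≤ b) (hp : ContinuousOn p (Icc a b))
    (hp₀ : ∀ r ∈ Icc a b, 0 < p r) (hQ : ContinuousOn Q (Icc a b)) :
    ∃ p' Q' p₀ p₁ q, CoeffBounds p' Q' p₀ p₁ q ∧ EqOn p' p (Icc a b) ∧ EqOn Q' Q (Icc a b) := by
  obtain ⟨m, hm, hmin⟩ := isCompact_Icc.exists_isMinOn (nonempty_Icc.2 hab) hp
  obtain ⟨M, -, hmax⟩ := isCompact_Icc.exists_isMaxOn (nonempty_Icc.2 hab) hp
  obtain ⟨q, hq⟩ := isCompact_Icc.exists_bound_of_continuousOn hQ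
  exact ⟨IccExtend hab ((Icc a b).domRestrict p), IccExtend hab ((Icc a b).domRestrict Q),
    p m, p M, q,
    { continuous_weight := hp.domRestrict.Icc_extend'
      continuous_coeff := hQ.domRestrict.Icc_extend'
      p₀_pos := hp₀ m hm
      le_weight := fun r => hmin (projIcc a b hab r).2
      weight_le := fun r => hmax (projIcc a b hab r).2
      abs_coeff_le := fun r => hq _ (projIcc a b hab r).2 },
    fun _ hr => IccExtend_of_mem hab _ hr, fun _ hr => IccExtend_of_mem hab _ hr⟩

theorem CondQ1.congr (hq1 : CondQ1 a b Q) (h : EqOn Q' Q (Icc a b)) : CondQ1 a b Q' := by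
  obtain ⟨m, σ, τ, hm, hστ, hdisj, hnonneg, hpos, hnonpos⟩ := hq1
  have hsub (i : Fin m) : Icc (σ i) (τ i) ⊆ Icc a b := Icc_subset_Icc (hστ i).1 (hστ i).2.2
  refine ⟨m, σ, τ, hm, hστ, hdisj, fun i r hr => ?_, fun i => ?_, fun r hr => ?_⟩
  · rw [h (hsub i hr)]
    exact hnonneg i r hr
  · obtain ⟨r, hr, hQr⟩ := hpos i
    exact ⟨r, hr, by rwa [h (hsub i hr)]⟩
  · rw [h hr.1]
    exact hnonpos r hr

theorem exists_pos_neumann_of_continuousOn (hab : a < b) (hp : ContinuousOn p (Icc a b))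
    (hp₀ : ∀ r ∈ Icc a b, 0 < p r) (hQ : ContinuousOn Q (Icc a b)) (hq1 : CondQ1 a b Q)
    (hI : ∫ r in a..b, p r * Q r < 0) :
    ∃ κ : ℝ≥0, 0 < κ ∧ ∃ Λ : ℝ, ∀ g, CondG1 g → (∃ ε > 0, LipschitzOnWith κ g (Icc 0 ε)) →
      (∀ᶠ s in atTop, Λ * s ≤ g s) → ∃ w y, IsRadialSol a b p (fun r s => Q r * g s) w y ∧
        y a = 0 ∧ y b = 0 ∧ ∀ r ∈ Icc a b, 0 < w r := by
  obtain ⟨p', Q', p₀, p₁, q, hc, hp', hQ'⟩ := exists_coeffBounds_eqOn hab.le hp hp₀ hQ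
  have hI' : ∫ r in a..b, p' r * Q' r < 0 := by
    rwa [intervalIntegral.integral_congr (g := fun r => p r * Q r)]
    rw [uIcc_of_le hab.le]
    exact fun r hr => congrArg₂ (· * ·) (hp' hr) (hQ' hr)
  obtain ⟨κ, hκ, Λ, hexists⟩ := exists_pos_neumann hc hab (hq1.congr hQ') hI'
  refine ⟨κ, hκ, Λ, fun g hg hlip hgrow => ?_⟩
  obtain ⟨w, y, hs, hsol⟩ := hexists g hg hlip hgrow
  exact ⟨w, y, ⟨fun r hr => hp' hr ▸ hs.hasDerivAt r hr, fun r hr => by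
    simpa only [hp' hr, hQ' hr] using hs.hasDerivAt_flux r hr⟩, hsol⟩

theorem IsRadialSol.radialNeumannPosSol {n : ℕ} (ha : 0 < a)
    (hs : IsRadialSol a b (· ^ n) (fun r s => Q r * g s) w y) (hQ : ContinuousOn Q (Icc a b))
    (hg : ContinuousOn g (Ici 0)) (hya : y a = 0) (hyb : y b = 0) (hw : ∀ r ∈ Icc a b, 0 < w r) :
    RadialNeumannPosSol (n + 1) a b Q g := by
  have hne : ∀ r ∈ Icc a b, r ≠ 0 := fun r hr => (ha.trans_le hr.1).ne'
  have hw'' : ∀ r ∈ Icc a b, HasDerivAt (fun r => y r / r ^ n)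
      (-(Q r * g (w r)) - n / r * (y r / r ^ n)) r := fun r hr => by
    have hr₀ := hne r hr
    refine ((hs.hasDerivAt_flux r hr).div (hasDerivAt_pow n r) (pow_ne_zero n hr₀)).congr_deriv ?_
    rcases n with _ | n
    · simp
    · push_cast
      field_simp
      ring
  refine ⟨w, fun r => y r / r ^ n, fun r => -(Q r * g (w r)) - n / r * (y r / r ^ n),
    fun r hr => (hs.hasDerivAt r hr).hasDerivWithinAt, fun r hr => (hw'' r hr).hasDerivWithinAt,
    ?_, hw, fun r _ => ?_, by simp only [hya, zero_div], by simp only [hyb, zero_div]⟩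
  · have hw' : ContinuousOn (fun r => y r / r ^ n) (Icc a b) := fun r hr =>
      (hw'' r hr).continuousAt.continuousWithinAt
    exact (hQ.mul (hg.comp hs.continuousOn fun r hr => (hw r hr).le)).neg.sub
      ((continuousOn_const.div continuousOn_id hne).mul hw')
  · push_cast
    ring

theorem exists_lipschitzOnWith_Icc_of_deriv_zero (hε : 0 < ε)
    (hg : ∀ s ∈ Ico 0 ε, HasDerivWithinAt g (g' s) (Ico 0 ε) s) (hg' : ContinuousOn g' (Ico 0 ε))
    (hg'₀ : g' 0 = 0) (hκ : 0 < κ) : ∃ η > 0, LipschitzOnWith κ g (Icc 0 η) := by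
  have hsmall : ∀ᶠ s in 𝓝[≥] 0, s < ε ∧ ‖g' s‖₊ < κ := by
    have hcont : Tendsto g' (𝓝[≥] 0) (𝓝 (g' 0)) :=
      nhdsWithin_Ico_eq_nhdsGE hε ▸ hg' 0 ⟨le_rfl, hε⟩
    refine .and (eventually_nhdsWithin_of_eventually_nhds (eventually_lt_nhds hε)) ?_
    exact hcont.nnnorm.eventually_lt_const (by simpa [hg'₀])
  obtain ⟨η, hη, hηsub⟩ := mem_nhdsGE_iff_exists_Icc_subset.1 hsmall
  have hsub : Icc 0 η ⊆ Ico 0 ε := fun s hs => ⟨hs.1, (hηsub hs).1⟩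
  exact ⟨η, hη, (convex_Icc 0 η).lipschitzOnWith_of_nnnorm_hasDerivWithin_le
    (fun s hs => (hg s (hsub hs)).mono hsub) fun s hs => (hηsub hs).2.le⟩

theorem eventually_mul_le_of_tendsto_div_atTop (hg : Tendsto (fun s => g s / s) atTop atTop)
    (Λ : ℝ) : ∀ᶠ s in atTop, Λ * s ≤ g s := by
  filter_upwards [hg.eventually_ge_atTop Λ, eventually_gt_atTop 0] with s hs hs₀
  exact (le_div_iff₀ hs₀).1 hs

end Annulus

theorem statement_14_general (N : ℕ) (hN : 0 < N) (R₁ R₂ : ℝ) (hR1 : 0 < R₁) (hR12 : R₁ < R₂)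
    (Q : ℝ → ℝ) (hQc : ContinuousOn Q (Icc R₁ R₂)) (hq1 : CondQ1 R₁ R₂ Q)
    (hq2 : (∫ r in R₁..R₂, r ^ (N - 1) * Q r) < 0) :
    ∃ κ : ℝ≥0, 0 < κ ∧ ∃ Λ : ℝ, ∀ g, CondG1 g → (∃ ε > 0, LipschitzOnWith κ g (Icc 0 ε)) →
      (∀ᶠ s in atTop, Λ * s ≤ g s) → RadialNeumannPosSol N R₁ R₂ Q g := by
  obtain ⟨n, rfl⟩ := Nat.exists_eq_add_one.2 hN
  obtain ⟨κ, hκ, Λ, hexists⟩ := exists_pos_neumann_of_continuousOn hR12 (continuousOn_pow n)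
    (fun r hr => pow_pos (hR1.trans_le hr.1) n) hQc hq1 hq2
  refine ⟨κ, hκ, Λ, fun g hg hlip hgrow => ?_⟩
  obtain ⟨w, y, hs, hya, hyb, hw⟩ := hexists g hg hlip hgrow
  exact hs.radialNeumannPosSol hR1 hQc hg.1 hya hyb hw

/-- Theorem: for `N ≥ 2`, `0 < R₁ < R₂`, a continuous radial weight `Q`
satisfying (q1) and (q2), and `g` satisfying (g1), continuously differentiable
on a right neighborhood of `0` with `g'(0) = 0`, and `g(s)/s → +∞` as `s → +∞`,
the Neumann problem `−Δu = Q(‖x‖) g(u)` on the annulus has a positive radially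
symmetric solution. -/
theorem statement_14
    (N : ℕ) (hN : 2 ≤ N) (R₁ R₂ : ℝ) (hR1 : 0 < R₁) (hR12 : R₁ < R₂)
    (Q : ℝ → ℝ) (hQc : ContinuousOn Q (Icc R₁ R₂))
    (hq1 : CondQ1 R₁ R₂ Q)
    (hq2 : (∫ r in R₁..R₂, r ^ (N - 1) * Q r) < 0)
    (g : ℝ → ℝ) (hg1 : CondG1 g)
    (hsmooth : ∃ ε₀ > (0:ℝ), ∃ g' : ℝ → ℝ,
      (∀ s ∈ Ico (0:ℝ) ε₀, HasDerivWithinAt g (g' s) (Ico (0:ℝ) ε₀) s) ∧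
      ContinuousOn g' (Ico (0:ℝ) ε₀) ∧ g' 0 = 0)
    (hginf : Tendsto (fun s => g s / s) atTop atTop) :
    RadialNeumannPosSol N R₁ R₂ Q g := by
  obtain ⟨κ, hκ, Λ, hexists⟩ := statement_14_general N (two_pos.trans_le hN) R₁ R₂ hR1 hR12 Q hQc
    hq1 hq2
  obtain ⟨ε, hε, g', hg, hg', hg'₀⟩ := hsmooth
  exact hexists g hg1 (exists_lipschitzOnWith_Icc_of_deriv_zero hε hg hg' hg'₀ hκ)
    (eventually_mul_le_of_tendsto_div_atTop hginf Λ)
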